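/- arXiv:1612.04008 — 3 statements merged into one kernel-verified Lean document; each statement's English description precedes it below -/
import Mathlib

section
/- There exist a constant C > 0 independent of m and an integer l_0 such that for all l > l_0, all r ∈ {1,…,(m+1)^k}, all t ∈ {1,…,n+1}, and every function φ : ℝ^n → ℝ with ‖φ‖_* < ∞ satisfying the orthogonality condition ∫_{ℝ^n} U_{P^r,Λ_r}^{4s/(n−2s)} Z_{r,t} φ dx = 0, one has | ∫_{ℝ^n} K(x/λ) W_m^{4s/(n−2s)} Z_{r,t} φ dx | ≤ C ‖φ‖_* λ^{−(τ−s)} (λl)^{−n/2}. -/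
/-- `X` enumerates the lattice points `{d·q : q ∈ ([0,m+1)^k × {0}) ∩ ℤ^n}` (with spacing `d = λl`). -/
def latticeEnum (n k m : ℕ) (d : ℝ)
    (X : Fin ((m + 1) ^ k) → EuclideanSpace ℝ (Fin n)) : Prop :=
  Function.Injective X ∧
  (∀ i, ∃ q : Fin n → ℤ,
      (∀ j : Fin n, (j : ℕ) < k → 0 ≤ q j ∧ q j ≤ (m : ℤ)) ∧
      (∀ j : Fin n, k ≤ (j : ℕ) → q j = 0) ∧
      (∀ j : Fin n, X i j = d * (q j : ℝ))) ∧
  (∀ q : Fin n → ℤ,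
      (∀ j : Fin n, (j : ℕ) < k → 0 ≤ q j ∧ q j ≤ (m : ℤ)) →
      (∀ j : Fin n, k ≤ (j : ℕ) → q j = 0) →
      ∃ i, ∀ j : Fin n, X i j = d * (q j : ℝ))

/-- Conditions (H₁)–(H₃) on `K`, with `K(0) = 1`: positivity and boundedness, `C^{1,1}`
regularity, `1`-periodicity in the first `k` variables, and the expansion
`K(x) = 1 + Σ aᵢ|xᵢ|^β + R(x)` near the critical point `0`. -/
def KHyp (n k : ℕ) (β : ℝ) (a : Fin n → ℝ)
    (K : EuclideanSpace ℝ (Fin n) → ℝ) : Prop :=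
  (∃ K₀ K₁ : ℝ, 0 < K₀ ∧ ∀ x, K₀ ≤ K x ∧ K x ≤ K₁) ∧
  ContDiff ℝ 1 K ∧ (∃ L : NNReal, LipschitzWith L (fderiv ℝ K)) ∧
  (∀ x : EuclideanSpace ℝ (Fin n), ∀ j : Fin n, (j : ℕ) < k →
      K (x + EuclideanSpace.single j (1 : ℝ)) = K x) ∧
  K 0 = 1 ∧ fderiv ℝ K 0 = 0 ∧
  (∀ i, a i ≠ 0) ∧ (∑ i, a i) < 0 ∧
  ∃ R : EuclideanSpace ℝ (Fin n) → ℝ,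
    (∀ᶠ x in nhds 0, K x = 1 + (∑ i, a i * |x i| ^ β) + R x) ∧
    ContDiff ℝ (⌊β⌋₊ - 1 : ℕ) R ∧
    (∃ L : NNReal, LipschitzWith L (iteratedFDeriv ℝ (⌊β⌋₊ - 1) R)) ∧
    Filter.Tendsto
      (fun y : EuclideanSpace ℝ (Fin n) =>
        ∑ j ∈ Finset.range (⌊β⌋₊ + 1), ‖iteratedFDeriv ℝ j R y‖ * ‖y‖ ^ (-β + (j : ℝ)))
      (nhdsWithin 0 {0}ᶜ) (nhds 0)

section

open Finset

namespace S8

lemma rpow_neg_anti {x y e : ℝ} (hx : 0 < x) (hxy : x ≤ y) (he : 0 ≤ e) : y ^ (-e) ≤ x ^ (-e) :=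
  Real.rpow_le_rpow_of_nonpos hx hxy (by linarith)

/-- two point inequality -/
lemma two_pt {x y D e h : ℝ} (hx : 1 ≤ x) (hy : 1 ≤ y) (hD : 0 < D) (hxy : D ≤ x + y)
    (hh : 0 ≤ h) (he : h ≤ e) :
    x ^ (-e) * y ^ (-h) ≤ (D / 2) ^ (-h) * (x ^ (-e) + y ^ (-e)) := by
  have hx0 : 0 < x := by linarith
  have hy0 : 0 < y := by linarith
  have h1 : 0 < x ^ (-e) := Real.rpow_pos_of_pos hx0 _
  have h2 : 0 < y ^ (-e) := Real.rpow_pos_of_pos hy0 _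
  have h3 : 0 < (D / 2) ^ (-h) := Real.rpow_pos_of_pos (by linarith) _
  rcases le_total x y with hc | hc
  · have h4 : y ^ (-h) ≤ (D / 2) ^ (-h) := rpow_neg_anti (by linarith) (by linarith) hh
    nlinarith [mul_le_mul_of_nonneg_left h4 h1.le, mul_pos h3 h2]
  · have h4 : x ^ (-h) ≤ (D / 2) ^ (-h) := rpow_neg_anti (by linarith) (by linarith) hh
    have h5 : x ^ (-(e - h)) ≤ y ^ (-(e - h)) := rpow_neg_anti hy0 hc (by linarith)
    have e1 : x ^ (-e) = x ^ (-h) * x ^ (-(e - h)) := by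
      rw [← Real.rpow_add hx0]; congr 1; ring
    have e2 : y ^ (-e) = y ^ (-(e - h)) * y ^ (-h) := by
      rw [← Real.rpow_add hy0]; congr 1; ring
    calc x ^ (-e) * y ^ (-h) = x ^ (-h) * x ^ (-(e - h)) * y ^ (-h) := by rw [e1]
      _ ≤ (D / 2) ^ (-h) * y ^ (-(e - h)) * y ^ (-h) := by gcongr
      _ = (D / 2) ^ (-h) * y ^ (-e) := by rw [e2]; ring
      _ ≤ _ := by nlinarith [mul_pos h3 h1]

lemma half_rpow {D d τ h : ℝ} (hd : 0 < d) (hD : d ≤ D) (hτ : τ ≤ h) :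
    (D / 2) ^ (-h) ≤ 2 ^ h * (d ^ (-h) * (D / d) ^ (-τ)) := by
  have hD0 : 0 < D := by linarith
  have e1 : (D / 2) ^ (-h) = 2 ^ h * (d ^ (-h) * (D / d) ^ (-h)) := by
    have : D / 2 = 2⁻¹ * (d * (D / d)) := by field_simp
    rw [this, Real.mul_rpow (by norm_num) (by positivity), Real.mul_rpow hd.le (by positivity),
      Real.inv_rpow (by norm_num), Real.rpow_neg (by norm_num), inv_inv]
  rw [e1]
  have : (D / d) ^ (-h) ≤ (D / d) ^ (-τ) :=
    Real.rpow_le_rpow_of_exponent_le ((one_le_div hd).2 hD) (by linarith)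
  gcongr

variable {ι : Type*} [Fintype ι] [DecidableEq ι]

/-- tail sum away from nearest -/
lemma sum_near {A : ι → ℝ} {D : ι → ι → ℝ} {d τ M e : ℝ} (hA : ∀ i, 1 ≤ A i) (hd : 0 < d)
    (hD : ∀ i j, i ≠ j → d ≤ D i j) (hDA : ∀ i j, D i j ≤ A i + A j)
    (hτ : 0 < τ)
    (hM : ∀ j, ∑ i ∈ univ.erase j, (D i j / d) ^ (-τ) ≤ M) (j : ι) (hj : ∀ i, A j ≤ A i)
    (he : τ ≤ e) :
    ∑ i ∈ univ.erase j, A i ^ (-e) ≤ 2 ^ τ * M * (A j / d) ^ τ * A j ^ (-e) := by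
  have hA0 : ∀ i, 0 < A i := fun i => by linarith [hA i]
  have key : ∀ i ∈ univ.erase j, A i ^ (-e) ≤
      (D i j / d) ^ (-τ) * (2 ^ τ * (A j / d) ^ τ * A j ^ (-e)) := by
    intro i hi
    have hij : i ≠ j := (mem_erase.1 hi).1
    have h1 : A i ^ (-e) = A i ^ (-τ) * A i ^ (-(e - τ)) := by
      rw [← Real.rpow_add (hA0 i)]; congr 1; ring
    have hDp := hD i j hij
    have h2 : A i ^ (-τ) ≤ (D i j / 2) ^ (-τ) :=
      rpow_neg_anti (by linarith) (by linarith [hDA i j, hj i]) hτ.le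
    have h3 := h2.trans (half_rpow (h := τ) hd hDp le_rfl)
    have h4 : A i ^ (-(e - τ)) ≤ A j ^ (-(e - τ)) := rpow_neg_anti (hA0 j) (hj i) (by linarith)
    have h5 : A j ^ (-(e - τ)) * d ^ (-τ) = (A j / d) ^ τ * A j ^ (-e) := by
      rw [Real.div_rpow (hA0 j).le hd.le, Real.rpow_neg hd.le,
        show -(e - τ) = τ + -e by ring, Real.rpow_add (hA0 j)]
      field_simp
    rw [h1]
    have := hA0 i
    have := hA0 j
    have hDr : 0 < D i j := by linarith
    calc _ ≤ 2 ^ τ * (d ^ (-τ) * (D i j / d) ^ (-τ)) * A j ^ (-(e - τ)) := by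
          gcongr
      _ = 2 ^ τ * (D i j / d) ^ (-τ) * (A j ^ (-(e - τ)) * d ^ (-τ)) := by ring
      _ = _ := by rw [h5]; ring
  refine (sum_le_sum key).trans ?_
  rw [← sum_mul]
  have := hA0 j
  calc _ ≤ M * (2 ^ τ * (A j / d) ^ τ * A j ^ (-e)) := by
        gcongr; exact hM j
    _ = _ := by ring

/-- weights -/
noncomputable def wt (D : ι → ι → ℝ) (d τ : ℝ) (r i : ι) : ℝ :=
  if i = r then 1 else (D i r / d) ^ (-τ)

noncomputable def HH (A : ι → ℝ) (D : ι → ι → ℝ) (d τ e : ℝ) (r : ι) : ℝ :=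
  ∑ i, wt D d τ r i * A i ^ (-e)

lemma HH_eq (A : ι → ℝ) (D : ι → ι → ℝ) (d τ e : ℝ) (r : ι) :
    HH A D d τ e r = A r ^ (-e) + ∑ i ∈ univ.erase r, (D i r / d) ^ (-τ) * A i ^ (-e) := by
  unfold HH
  rw [← add_sum_erase _ _ (mem_univ r)]
  congr 1
  · simp [wt]
  · apply sum_congr rfl
    intro i hi
    simp [wt, (mem_erase.1 hi).1]

/-- the mixed sum -/
lemma mid_sum {A : ι → ℝ} {D : ι → ι → ℝ} {d τ M e ε' h : ℝ} (hA : ∀ i, 1 ≤ A i) (hd : 0 < d)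
    (hD : ∀ i j, i ≠ j → d ≤ D i j) (hDA : ∀ i j, D i j ≤ A i + A j)
    (hτ : 0 < τ) (hM1 : 1 ≤ M)
    (hM : ∀ j, ∑ i ∈ univ.erase j, (D i j / d) ^ (-τ) ≤ M) (r : ι)
    (hh : τ ≤ h) (he : h ≤ e) (hε : ε' ≤ e) :
    A r ^ (-e) * ∑ i ∈ univ.erase r, A i ^ (-h) ≤
      2 ^ h * M * (d ^ (-h) * HH A D d τ ε' r) := by
  have hA0 : ∀ i, 0 < A i := fun i => by linarith [hA i]
  have hle : ∀ i, A i ^ (-e) ≤ A i ^ (-ε') := fun i =>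
    Real.rpow_le_rpow_of_exponent_le (hA i) (by linarith)
  have key : ∀ i ∈ univ.erase r, A r ^ (-e) * A i ^ (-h) ≤
      2 ^ h * d ^ (-h) * ((D i r / d) ^ (-τ) * A r ^ (-ε') + (D i r / d) ^ (-τ) * A i ^ (-ε')) := by
    intro i hi
    have hij : i ≠ r := (mem_erase.1 hi).1
    have hDp := hD i r hij
    have h1 := two_pt (hA r) (hA i) (by linarith : 0 < D i r) (by linarith [hDA i r])
      (by linarith) he
    have h2 := half_rpow hd hDp hh
    have := hA0 i
    have := hA0 r
    refine h1.trans ?_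
    have hDr : 0 < D i r := by linarith
    calc _ ≤ 2 ^ h * (d ^ (-h) * (D i r / d) ^ (-τ)) * (A r ^ (-ε') + A i ^ (-ε')) := by
          have := hle r
          have := hle i
          apply mul_le_mul h2 (by linarith) (by positivity) (by positivity)
      _ = _ := by ring
  rw [mul_sum]
  refine (sum_le_sum key).trans ?_
  rw [← mul_sum, sum_add_distrib, ← sum_mul, HH_eq]
  have hnn : 0 ≤ ∑ i ∈ univ.erase r, (D i r / d) ^ (-τ) * A i ^ (-ε') := by
    apply sum_nonneg
    intro i hi
    have hij : i ≠ r := (mem_erase.1 hi).1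
    have hDp := hD i r hij
    have := hA0 i
    have hDr : 0 < D i r := by linarith
    positivity
  have hr : 0 ≤ A r ^ (-ε') := by have := hA0 r; positivity
  have : (∑ i ∈ univ.erase r, (D i r / d) ^ (-τ)) * A r ^ (-ε') +
      ∑ i ∈ univ.erase r, (D i r / d) ^ (-τ) * A i ^ (-ε') ≤
      M * (A r ^ (-ε') + ∑ i ∈ univ.erase r, (D i r / d) ^ (-τ) * A i ^ (-ε')) := by
    rw [mul_add]
    have := mul_le_mul_of_nonneg_right (hM r) hr
    nlinarith
  calc _ ≤ 2 ^ h * d ^ (-h) * (M * (A r ^ (-ε') + ∑ i ∈ univ.erase r, (D i r / d) ^ (-τ) * A i ^ (-ε'))) := by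
        gcongr
    _ = _ := by ring

end S8

end

section

open Finset
namespace S8
variable {ι : Type*} [Fintype ι] [DecidableEq ι]

lemma wt_nonneg {D : ι → ι → ℝ} {d τ : ℝ} (hd : 0 < d)
    (hD : ∀ i j, i ≠ j → d ≤ D i j) (r i : ι) : 0 ≤ wt D d τ r i := by
  unfold wt
  split_ifs with h
  · norm_num
  · have := hD i r h
    have : 0 < D i r := by linarith
    positivity

lemma term_le_HH {A : ι → ℝ} {D : ι → ι → ℝ} {d τ e : ℝ} (hA : ∀ i, 1 ≤ A i) (hd : 0 < d)
    (hD : ∀ i j, i ≠ j → d ≤ D i j) (r i : ι) :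
    wt D d τ r i * A i ^ (-e) ≤ HH A D d τ e r := by
  unfold HH
  apply single_le_sum (f := fun i => wt D d τ r i * A i ^ (-e)) _ (mem_univ i)
  intro i _
  have := wt_nonneg (τ := τ) hd hD r i
  have : 0 < A i := by linarith [hA i]
  positivity

set_option maxHeartbeats 1000000 in
/-- the region where the interaction dominates -/
lemma far_region {A : ι → ℝ} {D : ι → ι → ℝ} {d τ M ν s N p ε lam γ : ℝ} (hA : ∀ i, 1 ≤ A i)
    (hd : 0 < d)
    (hD : ∀ i j, i ≠ j → d ≤ D i j) (hDA : ∀ i j, D i j ≤ A i + A j)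
    (hτ : 0 < τ) (hM1 : 1 ≤ M)
    (hM : ∀ j, ∑ i ∈ univ.erase j, (D i j / d) ^ (-τ) ≤ M) (r : ι)
    (hN : N = ν - 2 * s) (hpN : p * N = 4 * s) (hp0 : 0 < p) (hp2 : p < 2)
    (hs0 : 0 < s) (hν : 4 * s < ν) (hsτ : s ≤ τ) (hτN : τ < N / 2)
    (hε1 : ε ≤ 2 * s) (hε2 : ε ≤ ν / 2 + s - τ * (1 + p))
    (hlam : 0 < lam) (hlamd : lam ≤ d) (hd1 : 1 ≤ d)
    (hγ0 : 0 ≤ γ) (hγ1 : γ ≤ 1) (hγ : ∀ i, γ ≤ lam ^ (-(τ - s)) * A i ^ (τ - s))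
    (huv : A r ^ (-N) < ∑ i ∈ univ.erase r, A i ^ (-N)) :
    (∑ i ∈ univ.erase r, A i ^ (-N)) ^ p * A r ^ (-N) * γ * ∑ i, A i ^ (-(N / 2 + τ)) ≤
      (8 * 2 ^ (ν / 2) + (2 * (2 ^ τ * M)) ^ p * (2 * (2 ^ τ * M)) * (2 ^ τ * M) *
          (2 ^ τ * M) ^ ((ν / 2 + s - τ * (1 + p) - ε) / τ)) *
        (lam ^ (-(τ - s)) * (d ^ (-(ν / 2)) * HH A D d τ (ν + ε) r)) := by
  have hA0 : ∀ i, 0 < A i := fun i => by linarith [hA i]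
  have : Nonempty ι := ⟨r⟩
  obtain ⟨j, hj⟩ := Finite.exists_min A
  have hτ2 : (1:ℝ) ≤ 2 ^ τ := Real.one_le_rpow (by norm_num) hτ.le
  set M1 : ℝ := 2 ^ τ * M with hM1def
  have hM1' : 1 ≤ M1 := by nlinarith
  have hM10 : 0 < M1 := by linarith
  have hM12 : (2:ℝ) ^ τ ≤ M1 := by nlinarith
  set x : ℝ := (A j / d) ^ τ with hx
  have hx0 : 0 < x := by have := hA0 j; positivity
  have hsumE : ∀ e, τ ≤ e → ∑ i ∈ univ.erase j, A i ^ (-e) ≤ M1 * x * A j ^ (-e) :=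
    fun e he => sum_near hA hd hD hDA hτ hM j hj he
  have hsum : ∀ e, τ ≤ e → ∑ i, A i ^ (-e) ≤ (1 + M1 * x) * A j ^ (-e) := by
    intro e he
    rw [← add_sum_erase _ _ (mem_univ j)]
    linarith [hsumE e he]
  have hvle : ∑ i ∈ univ.erase r, A i ^ (-N) ≤ ∑ i, A i ^ (-N) := by
    apply sum_le_univ_sum_of_nonneg
    intro i; have := hA0 i; positivity
  set v := ∑ i ∈ univ.erase r, A i ^ (-N) with hv
  have hv0 : 0 ≤ v := by
    apply sum_nonneg; intro i _; have := hA0 i; positivity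
  set S := ∑ i, A i ^ (-(N / 2 + τ)) with hS
  have hS0 : 0 ≤ S := by
    apply sum_nonneg; intro i _; have := hA0 i; positivity
  have hlam' : 0 < lam ^ (-(τ - s)) := Real.rpow_pos_of_pos hlam _
  have hAj := hA0 j
  have hAr := hA0 r
  have hNpos : 0 < N := by linarith
  have hHj := term_le_HH (τ := τ) (e := ν + ε) hA hd hD r j
  have hwj := wt_nonneg (τ := τ) hd hD r j
  have hH0 : 0 ≤ HH A D d τ (ν + ε) r := le_trans (by positivity) hHj
  have hT0 : 0 ≤ lam ^ (-(τ - s)) * (d ^ (-(ν / 2)) * HH A D d τ (ν + ε) r) := by positivity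
  rcases lt_or_ge (M1 * x) 1 with hc | hc
  · -- near
    have hjr : j ≠ r := by
      rintro rfl
      have h1 := hsumE N (by linarith)
      have h2 : 0 < A j ^ (-N) := by positivity
      linarith [mul_lt_mul_of_pos_right hc h2]
    have h1 : v ≤ 2 * A j ^ (-N) := by
      have h2 : 0 < A j ^ (-N) := by positivity
      have := hsum N (by linarith)
      linarith [mul_lt_mul_of_pos_right hc h2]
    have h2 : S ≤ 2 * A j ^ (-(N / 2 + τ)) := by
      have h2 : 0 < A j ^ (-(N / 2 + τ)) := by positivity
      have := hsum (N / 2 + τ) (by linarith)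
      linarith [mul_lt_mul_of_pos_right hc h2]
    have h3 : v ^ p ≤ 4 * A j ^ (-(4 * s)) := by
      calc v ^ p ≤ (2 * A j ^ (-N)) ^ p := by gcongr
        _ = 2 ^ p * A j ^ (-(4 * s)) := by
          rw [Real.mul_rpow (by norm_num) (by positivity), ← Real.rpow_mul hAj.le]
          congr 2; linarith
        _ ≤ _ := by
          gcongr
          calc (2:ℝ) ^ p ≤ 2 ^ (2:ℝ) := Real.rpow_le_rpow_of_exponent_le (by norm_num) hp2.le
            _ = 4 := by norm_num
    have hDp := hD j r hjr
    have h4 : A r ^ (-N) ≤ 2 ^ (ν / 2) * (d ^ (-(ν / 2)) * wt D d τ r j) * A j ^ (-(N - ν / 2)) := by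
      have e1 : A r ^ (-N) = A r ^ (-(ν / 2)) * A r ^ (-(N - ν / 2)) := by
        rw [← Real.rpow_add hAr]; congr 1; ring
      rw [e1]
      have e2 : A r ^ (-(ν / 2)) ≤ (D j r / 2) ^ (-(ν / 2)) :=
        rpow_neg_anti (by linarith) (by linarith [hDA j r, hj r]) (by linarith)
      have e3 := e2.trans (half_rpow (τ := τ) hd hDp (by linarith))
      have e4 : A r ^ (-(N - ν / 2)) ≤ A j ^ (-(N - ν / 2)) :=
        rpow_neg_anti hAj (hj r) (by linarith)
      have e5 : wt D d τ r j = (D j r / d) ^ (-τ) := by simp [wt, hjr]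
      rw [e5]
      have : 0 < D j r := by linarith
      gcongr
    calc v ^ p * A r ^ (-N) * γ * S
        ≤ (4 * A j ^ (-(4 * s))) * (2 ^ (ν / 2) * (d ^ (-(ν / 2)) * wt D d τ r j) *
            A j ^ (-(N - ν / 2))) * (lam ^ (-(τ - s)) * A j ^ (τ - s)) *
            (2 * A j ^ (-(N / 2 + τ))) := by
          have := hγ j
          gcongr
      _ = 8 * 2 ^ (ν / 2) * (lam ^ (-(τ - s)) * (d ^ (-(ν / 2)) * (wt D d τ r j *
            (A j ^ (-(4 * s)) * A j ^ (-(N - ν / 2)) * A j ^ (τ - s) * A j ^ (-(N / 2 + τ)))))) := by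
          ring
      _ ≤ 8 * 2 ^ (ν / 2) * (lam ^ (-(τ - s)) * (d ^ (-(ν / 2)) * HH A D d τ (ν + ε) r)) := by
          gcongr
          refine le_trans ?_ hHj
          gcongr
          rw [← Real.rpow_add hAj, ← Real.rpow_add hAj, ← Real.rpow_add hAj]
          apply Real.rpow_le_rpow_of_exponent_le (hA j)
          rw [hN]; linarith
      _ ≤ _ := by
          gcongr
          simp only [le_add_iff_nonneg_right]
          positivity
  · -- far
    have h1 : v ≤ 2 * M1 * x * A j ^ (-N) := by
      have h2 : 0 < A j ^ (-N) := by positivity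
      have := hsum N (by linarith)
      linarith [mul_le_mul_of_nonneg_right hc h2.le]
    have h2 : S ≤ 2 * M1 * x * A j ^ (-(N / 2 + τ)) := by
      have h2 : 0 < A j ^ (-(N / 2 + τ)) := by positivity
      have := hsum (N / 2 + τ) (by linarith)
      linarith [mul_le_mul_of_nonneg_right hc h2.le]
    have h3 : v ^ p ≤ (2 * M1) ^ p * x ^ p * A j ^ (-(4 * s)) := by
      calc v ^ p ≤ (2 * M1 * x * A j ^ (-N)) ^ p := by gcongr
        _ = _ := by
          rw [Real.mul_rpow (by positivity) (by positivity),
            Real.mul_rpow (by positivity) (by positivity), ← Real.rpow_mul hAj.le]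
          congr 2; linarith
    have hxe : x = A j ^ τ * d ^ (-τ) := by
      rw [hx, Real.div_rpow hAj.le hd.le, Real.rpow_neg hd.le]; rfl
    have hjd : A j ^ (-τ) ≤ M1 * d ^ (-τ) := by
      have e1 : A j ^ (-τ) * A j ^ τ = 1 := by
        rw [← Real.rpow_add hAj]; simp
      have e2 : 0 < A j ^ (-τ) := by positivity
      rw [hxe] at hc
      calc A j ^ (-τ) = A j ^ (-τ) * 1 := by ring
        _ ≤ A j ^ (-τ) * (M1 * (A j ^ τ * d ^ (-τ))) := by gcongr
        _ = (A j ^ (-τ) * A j ^ τ) * (M1 * d ^ (-τ)) := by ring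
        _ = _ := by rw [e1]; ring
    have h4 : A r ^ (-N) ≤ M1 * d ^ (-τ) * wt D d τ r j * A j ^ (τ - N) := by
      have e1 : A r ^ (-N) = A r ^ (-τ) * A r ^ (-(N - τ)) := by
        rw [← Real.rpow_add hAr]; congr 1; ring
      have e4 : A r ^ (-(N - τ)) ≤ A j ^ (τ - N) := by
        rw [show τ - N = -(N - τ) by ring]
        exact rpow_neg_anti hAj (hj r) (by linarith)
      rw [e1]
      by_cases hjr : j = r
      · subst hjr
        simp only [wt, if_true, mul_one]
        gcongr
      · have hDp := hD j r hjr
        have e2 : A r ^ (-τ) ≤ (D j r / 2) ^ (-τ) :=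
          rpow_neg_anti (by linarith) (by linarith [hDA j r, hj r]) (by linarith)
        have e3 := e2.trans (half_rpow (τ := τ) hd hDp le_rfl)
        have e5 : wt D d τ r j = (D j r / d) ^ (-τ) := by simp [wt, hjr]
        rw [e5]
        have : 0 < D j r := by linarith
        calc _ ≤ (2 ^ τ * (d ^ (-τ) * (D j r / d) ^ (-τ))) * A j ^ (τ - N) := by gcongr
          _ ≤ (M1 * (d ^ (-τ) * (D j r / d) ^ (-τ))) * A j ^ (τ - N) := by gcongr
          _ = _ := by ring
    set δ := ν / 2 + s - τ * (1 + p) - ε with hδ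
    have hδ0 : 0 ≤ δ := by linarith
    have h5 : A j ^ (-δ) ≤ M1 ^ (δ / τ) * d ^ (-δ) := by
      calc A j ^ (-δ) = (A j ^ (-τ)) ^ (δ / τ) := by
            rw [← Real.rpow_mul hAj.le]; congr 1; field_simp
        _ ≤ (M1 * d ^ (-τ)) ^ (δ / τ) := by gcongr
        _ = _ := by
          rw [Real.mul_rpow hM10.le (by positivity), ← Real.rpow_mul hd.le]
          congr 2; field_simp
    have hxp : x ^ p = A j ^ (τ * p) * d ^ (-(τ * p)) := by
      rw [hxe, Real.mul_rpow (by positivity) (by positivity), ← Real.rpow_mul hAj.le,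
        ← Real.rpow_mul hd.le]
      congr 2; ring
    have h6 : d ^ (-δ) * d ^ (-(τ * p)) * d ^ (-τ) * d ^ (-τ) ≤ lam ^ (-(τ - s)) * d ^ (-(ν / 2)) := by
      calc _ = d ^ (-δ + -(τ * p) + -τ + -τ) := by
            rw [Real.rpow_add hd, Real.rpow_add hd, Real.rpow_add hd]
        _ ≤ d ^ (-(τ - s) + -(ν / 2)) := by
            apply Real.rpow_le_rpow_of_exponent_le hd1
            rw [hδ]; linarith
        _ = d ^ (-(τ - s)) * d ^ (-(ν / 2)) := Real.rpow_add hd _ _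
        _ ≤ _ := by
            gcongr 1
            exact rpow_neg_anti hlam hlamd (by linarith)
    have h7 : A j ^ (-(4 * s)) * A j ^ (τ * p) * A j ^ (τ - N) * A j ^ τ * A j ^ (-(N / 2 + τ)) =
        A j ^ (-δ) * A j ^ (-(ν + ε)) := by
      simp only [← Real.rpow_add hAj]
      congr 1; rw [hδ, hN]; ring
    calc v ^ p * A r ^ (-N) * γ * S
        ≤ ((2 * M1) ^ p * x ^ p * A j ^ (-(4 * s))) * (M1 * d ^ (-τ) * wt D d τ r j * A j ^ (τ - N))
          * 1 * (2 * M1 * x * A j ^ (-(N / 2 + τ))) := by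
          gcongr
      _ = ((2 * M1) ^ p * (2 * M1) * M1) * wt D d τ r j * (d ^ (-(τ * p)) * d ^ (-τ) * d ^ (-τ)) *
          (A j ^ (-(4 * s)) * A j ^ (τ * p) * A j ^ (τ - N) * A j ^ τ * A j ^ (-(N / 2 + τ))) := by
          rw [hxp, hxe]; ring
      _ ≤ ((2 * M1) ^ p * (2 * M1) * M1) * wt D d τ r j * (d ^ (-(τ * p)) * d ^ (-τ) * d ^ (-τ)) *
          ((M1 ^ (δ / τ) * d ^ (-δ)) * A j ^ (-(ν + ε))) := by
          rw [h7]; gcongr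
      _ = ((2 * M1) ^ p * (2 * M1) * M1 * M1 ^ (δ / τ)) *
          ((d ^ (-δ) * d ^ (-(τ * p)) * d ^ (-τ) * d ^ (-τ)) *
           (wt D d τ r j * A j ^ (-(ν + ε)))) := by ring
      _ ≤ ((2 * M1) ^ p * (2 * M1) * M1 * M1 ^ (δ / τ)) *
          ((lam ^ (-(τ - s)) * d ^ (-(ν / 2))) * HH A D d τ (ν + ε) r) := by
          gcongr
      _ ≤ _ := by
          rw [mul_assoc (lam ^ (-(τ - s)))]
          gcongr
          simp only [le_add_iff_nonneg_left]
          positivity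

end S8

end

section

open Finset
namespace S8
variable {ι : Type*} [Fintype ι] [DecidableEq ι]

lemma rpow_sum_le_sum (t : Finset ι) (f : ι → ℝ) (hf : ∀ i, 0 ≤ f i) {q : ℝ} (hq0 : 0 < q)
    (hq1 : q ≤ 1) : (∑ i ∈ t, f i) ^ q ≤ ∑ i ∈ t, f i ^ q := by
  induction t using Finset.induction_on with
  | empty => simp [Real.zero_rpow hq0.ne']
  | insert a t ha ih =>
    rw [sum_insert ha, sum_insert ha]
    have := Real.rpow_add_le_add_rpow (hf a) (sum_nonneg fun i (_ : i ∈ t) => hf i) hq0.le hq1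
    linarith

lemma near_region {A : ι → ℝ} {D : ι → ι → ℝ} {d τ M ν s N p q β' ε lam γ g : ℝ}
    (hA : ∀ i, 1 ≤ A i)
    (hd : 0 < d)
    (hD : ∀ i j, i ≠ j → d ≤ D i j) (hDA : ∀ i j, D i j ≤ A i + A j)
    (hτ : 0 < τ) (hM1 : 1 ≤ M)
    (hM : ∀ j, ∑ i ∈ univ.erase j, (D i j / d) ^ (-τ) ≤ M) (r : ι)
    (hN : N = ν - 2 * s) (hpN : p * N = 4 * s)
    (hs0 : 0 < s) (hν : 4 * s < ν) (hτN : τ < N / 2)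
    (hqN : q * N = ν / 2)
    (hε1 : ε ≤ 2 * s) (hε3 : β' + ε ≤ ν / 2 + 2 * s) (hlamβ : lam ^ (-β') = d ^ (-(ν / 2)))
    (hlam : 0 < lam)
    (hγ0 : 0 ≤ γ) (hγ : ∀ i, γ ≤ lam ^ (-(τ - s)) * A i ^ (τ - s))
    (hg0 : 0 ≤ g) (hg1 : g ≤ 1)
    (hg : g ≤ ((∑ i ∈ univ.erase r, A i ^ (-N)) / A r ^ (-N)) ^ q + (A r / lam) ^ β') :
    (A r ^ (-N)) ^ p * g * A r ^ (-N) * γ * ∑ i, A i ^ (-(N / 2 + τ)) ≤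
      (2 * (2 ^ (ν / 2) * M) + 1) *
        (lam ^ (-(τ - s)) * (d ^ (-(ν / 2)) * HH A D d τ (ν + ε) r)) := by
  have hA0 : ∀ i, 0 < A i := fun i => by linarith [hA i]
  have hAr := hA0 r
  have hNpos : 0 < N := by linarith
  have hq0 : 0 < q := by
    by_contra h; push Not at h; nlinarith
  have hq1 : q ≤ 1 := by
    by_contra h; push Not at h; nlinarith
  have hmid := mid_sum (ε' := ν + ε) (e := ν + 2 * s) (h := ν / 2) hA hd hD hDA hτ hM1 hM r
    (by linarith) (by linarith) (by linarith)
  set H := HH A D d τ (ν + ε) r with hH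
  set Sg := ∑ i ∈ univ.erase r, A i ^ (-(ν / 2)) with hSg
  have hSg0 : 0 ≤ Sg := sum_nonneg fun i _ => by have := hA0 i; positivity
  have hrH : A r ^ (-(ν + ε)) ≤ H := by
    have := term_le_HH (τ := τ) (e := ν + ε) hA hd hD r r
    simpa [wt] using this
  have hl := Real.rpow_pos_of_pos hlam (-(τ - s))
  have hu : (A r ^ (-N)) ^ p * A r ^ (-N) = A r ^ (-(ν + 2 * s)) := by
    rw [← Real.rpow_mul hAr.le, ← Real.rpow_add hAr]; congr 1; linarith
  have hγt : ∀ i, γ * A i ^ (-(N / 2 + τ)) ≤ lam ^ (-(τ - s)) * A i ^ (-(ν / 2)) := by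
    intro i
    have := hA0 i
    calc _ ≤ (lam ^ (-(τ - s)) * A i ^ (τ - s)) * A i ^ (-(N / 2 + τ)) := by
          gcongr; exact hγ i
      _ = lam ^ (-(τ - s)) * A i ^ (-(ν / 2)) := by
        rw [mul_assoc, ← Real.rpow_add this]; congr 2; rw [hN]; ring
  have hρ : ((∑ i ∈ univ.erase r, A i ^ (-N)) / A r ^ (-N)) ^ q ≤ A r ^ (ν / 2) * Sg := by
    have hs0 : 0 ≤ ∑ i ∈ univ.erase r, A i ^ (-N) :=
      sum_nonneg fun i _ => by have := hA0 i; positivity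
    rw [Real.div_rpow hs0 (by positivity), ← Real.rpow_mul hAr.le, div_eq_mul_inv,
      ← Real.rpow_neg hAr.le, mul_comm]
    have : -(-N * q) = ν / 2 := by linarith
    rw [this]
    gcongr
    refine (rpow_sum_le_sum _ _ (fun i => by have := hA0 i; positivity) hq0 hq1).trans ?_
    apply le_of_eq
    apply sum_congr rfl
    intro i _
    rw [← Real.rpow_mul (hA0 i).le]; congr 1; linarith
  have hβ : (A r / lam) ^ β' = d ^ (-(ν / 2)) * A r ^ β' := by
    rw [Real.div_rpow hAr.le hlam.le, ← hlamβ, Real.rpow_neg hlam.le]; field_simp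
  have hrterm : A r ^ (-(ν + 2 * s)) * g * (γ * A r ^ (-(N / 2 + τ))) ≤
      lam ^ (-(τ - s)) * (A r ^ (-(ν + 2 * s)) * Sg + d ^ (-(ν / 2)) * H) := by
    calc _ ≤ A r ^ (-(ν + 2 * s)) * (A r ^ (ν / 2) * Sg + d ^ (-(ν / 2)) * A r ^ β') *
          (lam ^ (-(τ - s)) * A r ^ (-(ν / 2))) := by
          have h1 := hγt r
          have h2 : g ≤ A r ^ (ν / 2) * Sg + d ^ (-(ν / 2)) * A r ^ β' := by
            rw [← hβ]; linarith
          gcongr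
      _ = lam ^ (-(τ - s)) * (A r ^ (-(ν + 2 * s)) * (A r ^ (ν / 2) * A r ^ (-(ν / 2))) * Sg +
          d ^ (-(ν / 2)) * (A r ^ (-(ν + 2 * s)) * A r ^ β' * A r ^ (-(ν / 2)))) := by ring
      _ ≤ _ := by
          have e1 : A r ^ (ν / 2) * A r ^ (-(ν / 2)) = 1 := by
            rw [← Real.rpow_add hAr]; simp
          rw [e1, mul_one]
          gcongr
          refine le_trans ?_ hrH
          rw [← Real.rpow_add hAr, ← Real.rpow_add hAr]
          apply Real.rpow_le_rpow_of_exponent_le (hA r)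
          linarith
  have hrest : A r ^ (-(ν + 2 * s)) * g * ∑ i ∈ univ.erase r, γ * A i ^ (-(N / 2 + τ)) ≤
      lam ^ (-(τ - s)) * (A r ^ (-(ν + 2 * s)) * Sg) := by
    have h1 : ∑ i ∈ univ.erase r, γ * A i ^ (-(N / 2 + τ)) ≤ lam ^ (-(τ - s)) * Sg := by
      rw [hSg, mul_sum]; exact sum_le_sum fun i _ => hγt i
    have h0 : 0 ≤ ∑ i ∈ univ.erase r, γ * A i ^ (-(N / 2 + τ)) :=
      sum_nonneg fun i _ => by have := hA0 i; positivity
    calc _ ≤ A r ^ (-(ν + 2 * s)) * 1 * (lam ^ (-(τ - s)) * Sg) := by gcongr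
      _ = _ := by ring
  calc _ = (A r ^ (-N)) ^ p * A r ^ (-N) * g * (γ * ∑ i, A i ^ (-(N / 2 + τ))) := by ring
    _ = A r ^ (-(ν + 2 * s)) * g * (γ * A r ^ (-(N / 2 + τ))) +
        A r ^ (-(ν + 2 * s)) * g * ∑ i ∈ univ.erase r, γ * A i ^ (-(N / 2 + τ)) := by
        rw [hu, mul_sum, ← add_sum_erase _ _ (mem_univ r)]; ring
    _ ≤ lam ^ (-(τ - s)) * (A r ^ (-(ν + 2 * s)) * Sg + d ^ (-(ν / 2)) * H) +
        lam ^ (-(τ - s)) * (A r ^ (-(ν + 2 * s)) * Sg) := add_le_add hrterm hrest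
    _ = lam ^ (-(τ - s)) * (2 * (A r ^ (-(ν + 2 * s)) * Sg) + d ^ (-(ν / 2)) * H) := by ring
    _ ≤ lam ^ (-(τ - s)) * (2 * (2 ^ (ν / 2) * M * (d ^ (-(ν / 2)) * H)) + d ^ (-(ν / 2)) * H) := by
        gcongr
    _ = _ := by ring

lemma one_add_rpow_sub {t p : ℝ} (ht : 0 ≤ t) (hp2 : p < 2) :
    (1 + t) ^ p - 1 ≤ 2 * t + t ^ 2 := by
  have : (1 + t) ^ p ≤ (1 + t) ^ (2 : ℝ) :=
    Real.rpow_le_rpow_of_exponent_le (by linarith) hp2.le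
  rw [Real.rpow_two] at this
  nlinarith

lemma diff_near {U V u v c Cu p q : ℝ} (hp0 : 0 < p) (hp2 : p < 2) (hq1 : q ≤ 1)
    (hu : 0 < u) (hc : 0 < c) (hcu : c * u ≤ U) (hUu : U ≤ Cu * u)
    (hV0 : 0 ≤ V) (hv : 0 ≤ v) (hVv : V ≤ Cu * v) (hvu : v ≤ u) :
    (U + V) ^ p - U ^ p ≤ Cu ^ p * (2 * (Cu / c) + (Cu / c) ^ 2) * (u ^ p * (v / u) ^ q) := by
  have hU : 0 < U := lt_of_lt_of_le (by positivity) hcu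
  have hCu : 0 < Cu := by
    by_contra h; push Not at h; nlinarith
  have ht : V / U ≤ Cu / c * (v / u) := by
    rw [div_mul_div_comm]
    gcongr
  have ht0 : 0 ≤ V / U := by positivity
  have e1 : (U + V) ^ p - U ^ p = U ^ p * ((1 + V / U) ^ p - 1) := by
    have : U + V = U * (1 + V / U) := by field_simp
    rw [this, Real.mul_rpow hU.le (by positivity)]; ring
  have hρ1 : v / u ≤ 1 := (div_le_one hu).2 hvu
  have hρ0 : 0 ≤ v / u := by positivity
  have hρq : v / u ≤ (v / u) ^ q := by
    rcases hρ0.eq_or_lt with h | h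
    · rw [← h]; positivity
    · calc v / u = (v / u) ^ (1:ℝ) := (Real.rpow_one _).symm
        _ ≤ _ := Real.rpow_le_rpow_of_exponent_ge h hρ1 hq1
  rw [e1]
  set ρ := v / u
  set Q := Cu / c
  have hQ : 0 < Q := by positivity
  have h1 : (1 + V / U) ^ p - 1 ≤ (2 * Q + Q ^ 2) * ρ ^ q := by
    refine (one_add_rpow_sub ht0 hp2).trans ?_
    calc 2 * (V / U) + (V / U) ^ 2 ≤ 2 * (Q * ρ) + (Q * ρ) ^ 2 := by gcongr
      _ = 2 * Q * ρ + Q ^ 2 * (ρ * ρ) := by ring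
      _ ≤ 2 * Q * ρ + Q ^ 2 * (ρ * 1) := by gcongr
      _ = (2 * Q + Q ^ 2) * ρ := by ring
      _ ≤ _ := by gcongr
  calc _ ≤ (Cu * u) ^ p * ((2 * Q + Q ^ 2) * ρ ^ q) := by
        have : 1 ≤ (1 + V / U) ^ p := Real.one_le_rpow (by linarith) hp0.le
        have : 0 ≤ (1 + V / U) ^ p - 1 := by linarith
        gcongr
    _ = _ := by rw [Real.mul_rpow hCu.le hu.le]; ring

lemma diff_far {U V u v Cu p : ℝ} (hp0 : 0 < p)
    (hU : 0 ≤ U) (hCu : 0 ≤ Cu) (hUu : U ≤ Cu * u)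
    (hV0 : 0 ≤ V) (hv : 0 ≤ v) (hVv : V ≤ Cu * v) (hvu : u ≤ v) :
    (U + V) ^ p - U ^ p ≤ (2 * Cu) ^ p * v ^ p := by
  have h1 : (U + V) ^ p ≤ (2 * Cu * v) ^ p := by
    gcongr
    nlinarith [mul_le_mul_of_nonneg_left hvu hCu]
  rw [Real.mul_rpow (by positivity) hv] at h1
  have : 0 ≤ U ^ p := by positivity
  linarith

lemma pointwise_bound (ν s N p q τ β' ε c Cu K1 CK M : ℝ) 
    (hτ : 0 < τ) (hM1 : 1 ≤ M)
    (hN : N = ν - 2 * s) (hpN : p * N = 4 * s) (hp0 : 0 < p) (hp2 : p < 2)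
    (hs0 : 0 < s) (hν : 4 * s < ν) (hsτ : s ≤ τ) (hτN : τ < N / 2)
    (hqN : q * N = ν / 2)
    (hε1 : ε ≤ 2 * s) (hε2 : ε ≤ ν / 2 + s - τ * (1 + p)) (hε3 : β' + ε ≤ ν / 2 + 2 * s)
    (hc : 0 < c) (hCu : 0 < Cu) (hK1 : 0 < K1) (hCK : 0 < CK) :
    ∃ C > 0, ∀ (m : ℕ) (A : Fin m → ℝ) (D : Fin m → Fin m → ℝ) (d lam γ : ℝ) (r : Fin m)
      (U V K : ℝ),
      (∀ i, 1 ≤ A i) → 1 ≤ d → (∀ i j, i ≠ j → d ≤ D i j) → (∀ i j, D i j ≤ A i + A j) →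
      (∀ j, ∑ i ∈ univ.erase j, (D i j / d) ^ (-τ) ≤ M) →
      lam ^ (-β') = d ^ (-(ν / 2)) → 0 < lam → lam ≤ d →
      0 ≤ γ → γ ≤ 1 → (∀ i, γ ≤ lam ^ (-(τ - s)) * A i ^ (τ - s)) →
      c * A r ^ (-N) ≤ U → U ≤ Cu * A r ^ (-N) → 0 ≤ V → 
      V ≤ Cu * ∑ i ∈ univ.erase r, A i ^ (-N) →
      0 ≤ K → K ≤ K1 → |K - 1| ≤ CK → |K - 1| ≤ CK * (A r / lam) ^ β' →
      |K * (U + V) ^ p - U ^ p| * A r ^ (-N) * γ * ∑ i, A i ^ (-(N / 2 + τ)) ≤ 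
        C * (lam ^ (-(τ - s)) * (d ^ (-(ν / 2)) * HH A D d τ (ν + ε) r)) := by
  set C3 : ℝ := 2 * (2 ^ (ν / 2) * M) + 1 with hC3
  set C4 : ℝ := (8 * 2 ^ (ν / 2) + (2 * (2 ^ τ * M)) ^ p * (2 * (2 ^ τ * M)) * (2 ^ τ * M) *
          (2 ^ τ * M) ^ ((ν / 2 + s - τ * (1 + p) - ε) / τ)) with hC4
  set C5 : ℝ := Cu ^ p * (2 * (Cu / c) + (Cu / c) ^ 2) with hC5
  have hMp : 0 < M := by linarith
  have hC3p : 0 < C3 := by positivity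
  have hC4p : 0 < C4 := by positivity
  have hC5p : 0 < C5 := by positivity
  have hNpos : 0 < N := by linarith
  have hq0 : 0 < q := by
    by_contra h; push Not at h; nlinarith
  have hq1 : q ≤ 1 := by
    by_contra h; push Not at h; nlinarith
  refine ⟨K1 * C5 * C3 + K1 * (2 * Cu) ^ p * C4 + CK * Cu ^ p * C3, by positivity, ?_⟩
  intro m A D d lam γ r U V K hA hd1 hD hDA hM hlamβ hlam hlamd hγ0 hγ1 hγ hU1 hU2 hV0 hV1 hK0 hKK
    hK2 hK3
  have hd : 0 < d := by linarith
  have hA0 : ∀ i, 0 < A i := fun i => by linarith [hA i]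
  have hAr := hA0 r
  have hu : 0 < A r ^ (-N) := by positivity
  have hUp : 0 < U := lt_of_lt_of_le (by positivity) hU1
  have hnear := fun g => near_region (γ := γ) (g := g) (lam := lam) (β' := β') (q := q) (p := p) hA hd hD hDA hτ hM1
    hM r hN hpN hs0 hν hτN hqN hε1 hε3 hlamβ hlam hγ0 hγ
  have hfar := far_region (p := p) (γ := γ) (lam := lam) hA hd hD hDA hτ hM1 hM r hN hpN hp0 hp2 hs0 hν hsτ hτN hε1
    hε2 hlam hlamd hd1 hγ0 hγ1 hγ
  rw [← hC4] at hfar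
  rw [← hC3] at hnear
  set T := lam ^ (-(τ - s)) * (d ^ (-(ν / 2)) * HH A D d τ (ν + ε) r) with hT
  set S := ∑ i, A i ^ (-(N / 2 + τ)) with hS
  have hS0 : 0 ≤ S := sum_nonneg fun i _ => by have := hA0 i; positivity
  set v := ∑ i ∈ univ.erase r, A i ^ (-N) with hv
  have hv0 : 0 ≤ v := sum_nonneg fun i _ => by have := hA0 i; positivity
  set u := A r ^ (-N) with hudef
  have hT0 : 0 ≤ T := by
    have hH0 : 0 ≤ HH A D d τ (ν + ε) r := by
      refine le_trans ?_ (term_le_HH hA hd hD r r)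
      have := wt_nonneg (τ := τ) hd hD r r
      positivity
    positivity
  -- the K part
  set g := min 1 ((A r / lam) ^ β') with hg
  have hg0 : 0 ≤ g := le_min (by norm_num) (by positivity)
  have hρ0 : 0 ≤ (v / u) ^ q := by positivity
  have hKpart : |K - 1| * U ^ p * u * γ * S ≤ CK * Cu ^ p * C3 * T := by
    have h1 : |K - 1| ≤ CK * g := by
      rw [hg, mul_min_of_nonneg _ _ hCK.le]
      exact le_min (by simpa using hK2) hK3
    have h2 : U ^ p ≤ Cu ^ p * u ^ p := by
      rw [← Real.mul_rpow hCu.le hu.le]; gcongr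
    have h3 := hnear g hg0 (min_le_left _ _)
      (by have := min_le_right 1 ((A r / lam) ^ β'); linarith)
    calc |K - 1| * U ^ p * u * γ * S ≤ (CK * g) * (Cu ^ p * u ^ p) * u * γ * S := by gcongr
      _ = CK * Cu ^ p * (u ^ p * g * u * γ * S) := by ring
      _ ≤ CK * Cu ^ p * (C3 * T) := by gcongr
      _ = _ := by ring
  have hWpart : ((U + V) ^ p - U ^ p) * u * γ * S ≤ (C5 * C3 + (2 * Cu) ^ p * C4) * T := by
    rcases le_or_gt v u with hc1 | hc1
    · have h1 := diff_near hp0 hp2 hq1 hu hc hU1 hU2 hV0 hv0 hV1 hc1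
      have h3 := hnear ((v / u) ^ q) hρ0
        (Real.rpow_le_one (by positivity) ((div_le_one hu).2 hc1) hq0.le)
        (by have : 0 ≤ (A r / lam) ^ β' := by positivity
            linarith)
      calc ((U + V) ^ p - U ^ p) * u * γ * S ≤ (C5 * (u ^ p * (v / u) ^ q)) * u * γ * S := by
            gcongr
        _ = C5 * (u ^ p * (v / u) ^ q * u * γ * S) := by ring
        _ ≤ C5 * (C3 * T) := by gcongr
        _ ≤ _ := by
          have : 0 ≤ (2 * Cu) ^ p * C4 * T := by positivity
          linarith
    · have h1 := diff_far hp0 hUp.le hCu.le hU2 hV0 hv0 hV1 hc1.le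
      have h3 := hfar hc1
      calc ((U + V) ^ p - U ^ p) * u * γ * S ≤ ((2 * Cu) ^ p * v ^ p) * u * γ * S := by
            gcongr
        _ = (2 * Cu) ^ p * (v ^ p * u * γ * S) := by ring
        _ ≤ (2 * Cu) ^ p * (C4 * T) := by gcongr
        _ ≤ _ := by
          have : 0 ≤ C5 * C3 * T := by positivity
          linarith
  have hW0 : 0 ≤ (U + V) ^ p - U ^ p := by
    have : U ^ p ≤ (U + V) ^ p := by gcongr; linarith
    linarith
  have habs : |K * (U + V) ^ p - U ^ p| ≤ K1 * ((U + V) ^ p - U ^ p) + |K - 1| * U ^ p := by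
    have e : K * (U + V) ^ p - U ^ p = K * ((U + V) ^ p - U ^ p) + (K - 1) * U ^ p := by ring
    rw [e]
    refine (abs_add_le _ _).trans ?_
    rw [abs_mul, abs_mul, abs_of_nonneg hK0, abs_of_nonneg hW0,
      abs_of_nonneg (by positivity : 0 ≤ U ^ p)]
    gcongr
  calc |K * (U + V) ^ p - U ^ p| * u * γ * S 
      ≤ (K1 * ((U + V) ^ p - U ^ p) + |K - 1| * U ^ p) * u * γ * S := by gcongr
    _ = K1 * (((U + V) ^ p - U ^ p) * u * γ * S) + |K - 1| * U ^ p * u * γ * S := by ring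
    _ ≤ K1 * ((C5 * C3 + (2 * Cu) ^ p * C4) * T) + CK * Cu ^ p * C3 * T := by gcongr
    _ = _ := by ring

end S8

end

section

open Finset
namespace S8

lemma lattice_sum (n k : ℕ) (τ : ℝ) (hkn : k ≤ n) (hτ : (k : ℝ) < τ) :
    ∃ M : ℝ, 1 ≤ M ∧ ∀ (m : ℕ) (d : ℝ) (X : Fin ((m + 1) ^ k) → EuclideanSpace ℝ (Fin n)), 0 < d →
      latticeEnum n k m d X →
      (∀ i j, i ≠ j → d ≤ ‖X i - X j‖) ∧
      ∀ j, ∑ i ∈ univ.erase j, (‖X i - X j‖ / d) ^ (-τ) ≤ M := by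
  let b := Pi.basisFun ℝ (Fin k)
  let L : Submodule ℤ (Fin k → ℝ) := Submodule.span ℤ (Set.range b)
  have hrank : Module.finrank ℤ L = k := by
    rw [ZLattice.rank ℝ L]; simp
  have hsum : Summable fun z : L ↦ ‖z‖ ^ (-τ) :=
    ZLattice.summable_norm_rpow L (-τ) (by rw [hrank]; linarith)
  refine ⟨max 1 (∑' z : L, ‖z‖ ^ (-τ)), le_max_left _ _, ?_⟩
  intro m d X hd hX
  obtain ⟨hinj, hq, -⟩ := hX
  choose q hq1 hq2 hq3 using hq
  have hmem : ∀ z : Fin k → ℤ, (fun a => (z a : ℝ)) ∈ L := by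
    intro z
    rw [Module.Basis.mem_span_iff_repr_mem]
    intro a
    exact ⟨z a, by simp [b]⟩
  let f : Fin ((m + 1) ^ k) → Fin ((m + 1) ^ k) → L := fun j i =>
    ⟨fun a => ((q i (Fin.castLE hkn a) - q j (Fin.castLE hkn a) : ℤ) : ℝ), hmem _⟩
  have hfinj : ∀ j, Function.Injective (f j) := by
    intro j i i' h
    apply hinj
    ext t
    rw [hq3, hq3]
    by_cases ht : (t : ℕ) < k
    · have h1 := congrFun (congrArg Subtype.val h) ⟨t, ht⟩
      have h2 : Fin.castLE hkn ⟨t, ht⟩ = t := by ext; simp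
      simp only [f, h2] at h1
      have h3 : q i t - q j t = q i' t - q j t := by exact_mod_cast h1
      have : q i t = q i' t := by linarith
      rw [this]
    · rw [hq2 i t (by omega), hq2 i' t (by omega)]
  have hfj : ∀ j, f j j = 0 := by
    intro j; ext a; simp [f]
  have hnorm : ∀ j i, d * ‖f j i‖ ≤ ‖X i - X j‖ := by
    intro j i
    rw [← le_div_iff₀' hd]
    change ‖(fun a => ((q i (Fin.castLE hkn a) - q j (Fin.castLE hkn a) : ℤ) : ℝ))‖ ≤ _
    rw [pi_norm_le_iff_of_nonneg (by positivity)]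
    intro a
    rw [le_div_iff₀' hd]
    have h1 := PiLp.norm_apply_le (X i - X j) (Fin.castLE hkn a)
    refine le_trans (le_of_eq ?_) h1
    rw [PiLp.sub_apply, hq3, hq3, ← mul_sub, norm_mul, Real.norm_of_nonneg hd.le]
    push_cast
    rfl
  have hge1 : ∀ j i, i ≠ j → 1 ≤ ‖f j i‖ := by
    intro j i hij
    have hne : f j i ≠ 0 := by
      rw [← hfj j]; exact fun h => hij (hfinj j h)
    have : ∃ a, q i (Fin.castLE hkn a) - q j (Fin.castLE hkn a) ≠ 0 := by
      by_contra hcon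
      push Not at hcon
      apply hne
      ext a
      simp [f, hcon a]
    obtain ⟨a, ha⟩ := this
    have h2 : ‖((q i (Fin.castLE hkn a) - q j (Fin.castLE hkn a) : ℤ) : ℝ)‖ ≤ ‖f j i‖ :=
      norm_le_pi_norm (fun a => ((q i (Fin.castLE hkn a) - q j (Fin.castLE hkn a) : ℤ) : ℝ)) a
    refine le_trans ?_ h2
    rw [Real.norm_eq_abs, ← Int.cast_abs]
    exact_mod_cast Int.one_le_abs ha
  refine ⟨fun i j hij => ?_, fun j => ?_⟩
  · have h1 := hnorm j i
    have h2 := hge1 j i hij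
    nlinarith
  · refine le_trans ?_ (le_max_right _ _)
    calc ∑ i ∈ univ.erase j, (‖X i - X j‖ / d) ^ (-τ) ≤ ∑ i ∈ univ.erase j, ‖f j i‖ ^ (-τ) := by
          apply sum_le_sum
          intro i hi
          have h2 := hge1 j i (mem_erase.1 hi).1
          apply Real.rpow_le_rpow_of_nonpos (by linarith)
          · rw [le_div_iff₀' hd]; exact hnorm j i
          · have : (0:ℝ) ≤ k := by positivity
            linarith
      _ = ∑ z ∈ (univ.erase j).image (f j), ‖z‖ ^ (-τ) := by
          rw [sum_image fun a _ b _ h => hfinj j h]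
      _ ≤ _ := hsum.sum_le_tsum _ fun z _ => by positivity

lemma bubble_bounds {E : Type*} [NormedAddCommGroup E] {C₀ C₁ C₂ N : ℝ} (hC₀ : 0 < C₀)
    (hC₁ : 0 < C₁) (hC₁₂ : C₁ < C₂) (hN : 0 < N) :
    ∃ c > 0, ∃ Cu > 0, ∀ (x P X : E) (Λ : ℝ), ‖P - X‖ < 1 / 2 → Λ ∈ Set.Icc C₁ C₂ →
      c * (1 + ‖x - X‖) ^ (-N) ≤ C₀ * (Λ / (1 + Λ ^ 2 * ‖x - P‖ ^ 2)) ^ (N / 2) ∧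
      C₀ * (Λ / (1 + Λ ^ 2 * ‖x - P‖ ^ 2)) ^ (N / 2) ≤ Cu * (1 + ‖x - X‖) ^ (-N) := by
  have hC₂ : 0 < C₂ := by linarith
  set a : ℝ := C₁ / (3 * (1 + C₂ ^ 2)) with ha
  set b : ℝ := C₂ * (9 / 2) * (1 + 1 / C₁ ^ 2) with hb
  have ha0 : 0 < a := by positivity
  have hb0 : 0 < b := by positivity
  refine ⟨C₀ * a ^ (N / 2), by positivity, C₀ * b ^ (N / 2), by positivity, ?_⟩
  rintro x P X Λ hP ⟨h1, h2⟩
  have hΛ : 0 < Λ := by linarith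
  set ρ := ‖x - P‖ with hρ
  have hρ0 : 0 ≤ ρ := norm_nonneg _
  set A := 1 + ‖x - X‖ with hA
  have hA1 : 1 ≤ A := by have := norm_nonneg (x - X); linarith
  have t1 : A ≤ 3 / 2 + ρ := by
    have := norm_add_le (x - P) (P - X)
    rw [sub_add_sub_cancel] at this; linarith
  have t2 : ρ ≤ A - 1 / 2 := by
    have := norm_add_le (x - X) (X - P)
    rw [sub_add_sub_cancel, norm_sub_rev X P] at this; linarith
  have hApow : ∀ t : ℝ, 0 < t → (t * (A ^ 2)⁻¹) ^ (N / 2) = t ^ (N / 2) * A ^ (-N) := by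
    intro t ht
    rw [Real.mul_rpow ht.le (by positivity), Real.inv_rpow (by positivity), Real.rpow_neg (by positivity),
      ← Real.rpow_natCast, ← Real.rpow_mul (by positivity)]
    congr 3; push_cast; ring
  have hden : 0 < 1 + Λ ^ 2 * ρ ^ 2 := by positivity
  have lo : a * (A ^ 2)⁻¹ ≤ Λ / (1 + Λ ^ 2 * ρ ^ 2) := by
    rw [← div_eq_mul_inv, ha, div_div, div_le_div_iff₀ (by positivity) hden]
    have e1 : Λ ^ 2 ≤ C₂ ^ 2 := by gcongr
    have e2 : ρ ^ 2 ≤ A ^ 2 := by gcongr; linarith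
    have e3 : 1 + Λ ^ 2 * ρ ^ 2 ≤ 3 * (1 + C₂ ^ 2) * A ^ 2 := by
      have : Λ ^ 2 * ρ ^ 2 ≤ C₂ ^ 2 * A ^ 2 := by gcongr
      nlinarith [sq_nonneg C₂, sq_nonneg A, mul_nonneg (sq_nonneg C₂) (sq_nonneg A)]
    gcongr
  have hi : Λ / (1 + Λ ^ 2 * ρ ^ 2) ≤ b * (A ^ 2)⁻¹ := by
    rw [← div_eq_mul_inv, div_le_div_iff₀ hden (by positivity)]
    have e1 : A ^ 2 ≤ 9 / 2 * (1 + ρ ^ 2) := by nlinarith [sq_nonneg (ρ - 3/2)]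
    have e2 : (1 + ρ ^ 2) ≤ (1 + 1 / C₁ ^ 2) * (1 + Λ ^ 2 * ρ ^ 2) := by
      have : C₁ ^ 2 ≤ Λ ^ 2 := by gcongr
      have : ρ ^ 2 ≤ 1 / C₁ ^ 2 * (Λ ^ 2 * ρ ^ 2) := by
        rw [one_div, ← div_eq_inv_mul, le_div_iff₀ (by positivity)]
        nlinarith [sq_nonneg ρ]
      have : 0 < 1 / C₁ ^ 2 := by positivity
      nlinarith [sq_nonneg (Λ * ρ)]
    calc Λ * A ^ 2 ≤ C₂ * (9 / 2 * ((1 + 1 / C₁ ^ 2) * (1 + Λ ^ 2 * ρ ^ 2))) := by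
          gcongr; linarith
      _ = _ := by rw [hb]; ring
  constructor
  · rw [mul_assoc, ← hApow a ha0]
    gcongr
  · rw [mul_assoc, ← hApow b hb0]
    gcongr

end S8

end

section

open Finset
namespace S8

lemma deriv_pow_bound {g : ℝ → ℝ} {g' b₀ C₀ c q : ℝ} (hg : HasDerivAt g g' b₀) (h0 : 0 < g b₀)
    (hC₀ : 0 < C₀) (hq : 0 < q) (hc : |g'| ≤ c * g b₀) :
    |deriv (fun b => C₀ * g b ^ q) b₀| ≤ q * c * (C₀ * g b₀ ^ q) := by
  have h1 := (hg.rpow_const (p := q) (Or.inl h0.ne')).const_mul C₀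
  rw [h1.deriv, abs_mul, abs_mul, abs_mul, abs_of_pos hC₀, abs_of_pos hq,
    abs_of_pos (Real.rpow_pos_of_pos h0 _)]
  have e : g b₀ ^ q = g b₀ * g b₀ ^ (q - 1) := by
    rw [← Real.rpow_one_add' h0.le (by linarith)]; congr 1; ring
  have : 0 < g b₀ ^ (q - 1) := Real.rpow_pos_of_pos h0 _
  calc C₀ * (|g'| * q * g b₀ ^ (q - 1)) ≤ C₀ * ((c * g b₀) * q * g b₀ ^ (q - 1)) := by gcongr
    _ = _ := by rw [e]; ring

lemma Z_center {n : ℕ} (C₀ Λ q : ℝ) (hC₀ : 0 < C₀) (hΛ : 0 < Λ) (hq : 0 < q)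
    (x P : EuclideanSpace ℝ (Fin n)) (t : Fin n) :
    |deriv (fun b : ℝ => C₀ * (Λ /
            (1 + Λ ^ 2 * ‖x - (P + b • EuclideanSpace.single t (1 : ℝ))‖ ^ 2)) ^ q) 0| ≤
      q * Λ * (C₀ * (Λ / (1 + Λ ^ 2 * ‖x - P‖ ^ 2)) ^ q) := by
  set e := EuclideanSpace.single t (1 : ℝ) with he
  have hne : ‖e‖ = 1 := by simp [he]
  have h1 : HasDerivAt (fun b : ℝ => x - (P + b • e)) (-e) 0 := by
    have := (((hasDerivAt_id (0:ℝ)).smul_const e).const_add P).const_sub x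
    simpa using this
  have h2 := h1.norm_sq
  have h3 := ((h2.const_mul (Λ ^ 2)).const_add 1)
  have hpos : (1 + Λ ^ 2 * ‖x - (P + (0:ℝ) • e)‖ ^ 2) ≠ 0 := by positivity
  have h4 := (h3.inv hpos).const_mul Λ
  have h5 : HasDerivAt (fun b : ℝ => Λ / (1 + Λ ^ 2 * ‖x - (P + b • e)‖ ^ 2)) _ 0 := h4
  have := deriv_pow_bound (c := Λ) h5 (by positivity) hC₀ hq ?_
  · simpa using this
  · simp only [zero_smul, add_zero]
    have hin : |inner ℝ (x - P) (-e)| ≤ ‖x - P‖ := by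
      have := abs_real_inner_le_norm (x - P) (-e)
      rwa [norm_neg, hne, mul_one] at this
    set ρ := ‖x - P‖
    have hρ : 0 ≤ ρ := norm_nonneg _
    have hD : 0 < 1 + Λ ^ 2 * ρ ^ 2 := by positivity
    rw [abs_mul, abs_div, abs_neg, abs_mul, abs_mul, abs_of_pos hΛ,
      abs_of_pos (by positivity : 0 < Λ ^ 2), abs_of_pos (by norm_num : (0:ℝ) < 2),
      abs_of_pos (by positivity : 0 < (1 + Λ ^ 2 * ρ ^ 2) ^ 2)]
    refine mul_le_mul_of_nonneg_left ?_ hΛ.le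
    rw [div_le_div_iff₀ (by positivity) hD]
    calc Λ ^ 2 * (2 * |inner ℝ (x - P) (-e)|) * (1 + Λ ^ 2 * ρ ^ 2)
        ≤ Λ ^ 2 * (2 * ρ) * (1 + Λ ^ 2 * ρ ^ 2) := by gcongr
      _ = Λ * (2 * (Λ * ρ)) * (1 + Λ ^ 2 * ρ ^ 2) := by ring
      _ ≤ Λ * (1 + Λ ^ 2 * ρ ^ 2) * (1 + Λ ^ 2 * ρ ^ 2) := by
          gcongr
          nlinarith [sq_nonneg (Λ * ρ - 1)]
      _ = _ := by ring

lemma Z_scale (C₀ Λ q ρ : ℝ) (hC₀ : 0 < C₀) (hΛ : 0 < Λ) (hq : 0 < q) :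
    |deriv (fun b : ℝ => C₀ * (b / (1 + b ^ 2 * ρ ^ 2)) ^ q) Λ| ≤
      q * Λ⁻¹ * (C₀ * (Λ / (1 + Λ ^ 2 * ρ ^ 2)) ^ q) := by
  have h3 := (((hasDerivAt_pow 2 Λ).mul_const (ρ ^ 2)).const_add 1)
  have hD : 0 < 1 + Λ ^ 2 * ρ ^ 2 := by positivity
  have h4 := (hasDerivAt_id Λ).div h3 hD.ne'
  have h5 : HasDerivAt (fun b : ℝ => b / (1 + b ^ 2 * ρ ^ 2)) _ Λ := h4
  apply deriv_pow_bound h5 (by positivity) hC₀ hq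
  simp only [id]
  rw [abs_div, abs_of_pos (by positivity : 0 < (1 + Λ ^ 2 * ρ ^ 2) ^ 2), inv_mul_eq_div, div_div,
    div_le_div_iff₀ (by positivity) (by positivity)]
  have : |1 * (1 + Λ ^ 2 * ρ ^ 2) - Λ * (((2:ℕ):ℝ) * Λ ^ (2 - 1) * ρ ^ 2)| ≤ 1 + Λ ^ 2 * ρ ^ 2 := by
    rw [abs_le]
    norm_num
    constructor <;> nlinarith [sq_nonneg (Λ * ρ)]
  calc _ ≤ (1 + Λ ^ 2 * ρ ^ 2) * ((1 + Λ ^ 2 * ρ ^ 2) * Λ) := by gcongr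
    _ = _ := by ring

lemma K_bound {n k : ℕ} {β β' : ℝ} {a : Fin n → ℝ} {K : EuclideanSpace ℝ (Fin n) → ℝ}
    (hK : KHyp n k β a K) (hβ' : 0 < β') (hββ : β' ≤ β) :
    ∃ K1 > 0, ∃ CK > 0, (∀ x, 0 < K x ∧ K x ≤ K1) ∧ (∀ x, |K x - 1| ≤ CK) ∧
      ∀ x, |K x - 1| ≤ CK * ‖x‖ ^ β' := by
  obtain ⟨⟨K0, K1, hK0, hKb⟩, -, -, -, hK00, -, -, -, R, hR, -, -, hlim⟩ := hK
  have hK1 : 0 < K1 := by have := hKb 0; linarith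
  have hlim1 : ∀ᶠ y in nhdsWithin (0 : EuclideanSpace ℝ (Fin n)) {0}ᶜ,
      ∑ j ∈ Finset.range (⌊β⌋₊ + 1), ‖iteratedFDeriv ℝ j R y‖ * ‖y‖ ^ (-β + (j : ℝ)) < 1 :=
    hlim.eventually_lt_const (by norm_num)
  rw [eventually_nhdsWithin_iff] at hlim1
  obtain ⟨δ, hδ, hball⟩ := Metric.eventually_nhds_iff.1 (hR.and hlim1)
  set δ' := min δ 1 with hδ'
  have hδ'0 : 0 < δ' := lt_min hδ (by norm_num)
  set Ca := ∑ i, |a i| with hCa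
  have hCa0 : 0 ≤ Ca := sum_nonneg fun i _ => abs_nonneg _
  have hb : ∀ x, |K x - 1| ≤ K1 + 1 := by
    intro x; have := hKb x; rw [abs_le]; constructor <;> linarith
  have hpd : 0 < δ' ^ (-β') := Real.rpow_pos_of_pos hδ'0 _
  refine ⟨K1, hK1, (K1 + 1) * (1 + δ' ^ (-β')) + Ca + 1, by positivity,
    fun x => ⟨by have := hKb x; linarith, (hKb x).2⟩, ?_, ?_⟩
  · intro x
    have := hb x
    nlinarith
  · intro x
    have hxp : 0 ≤ ‖x‖ ^ β' := by positivity
    rcases lt_or_ge ‖x‖ δ' with hx | hx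
    · by_cases hx0 : x = 0
      · subst hx0
        rw [hK00]; simp only [sub_self, abs_zero]; positivity
      have hxn : 0 < ‖x‖ := norm_pos_iff.2 hx0
      obtain ⟨e1, e2⟩ := hball (y := x) (by rw [dist_zero_right]; exact hx.trans_le (min_le_left _ _))
      have e3 := e2 hx0
      have hRx : |R x| ≤ ‖x‖ ^ β := by
        have h1 : ‖iteratedFDeriv ℝ 0 R x‖ * ‖x‖ ^ (-β + ((0:ℕ) : ℝ)) ≤
            ∑ j ∈ Finset.range (⌊β⌋₊ + 1), ‖iteratedFDeriv ℝ j R x‖ * ‖x‖ ^ (-β + (j : ℝ)) :=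
          single_le_sum (f := fun j : ℕ => ‖iteratedFDeriv ℝ j R x‖ * ‖x‖ ^ (-β + (j : ℝ)))
            (fun j _ => by positivity) (by simp)
        rw [norm_iteratedFDeriv_zero] at h1
        have h2 : ‖R x‖ * ‖x‖ ^ (-β) ≤ 1 := by
          simp only [Nat.cast_zero, add_zero] at h1; linarith
        rw [Real.rpow_neg hxn.le, ← div_eq_mul_inv, div_le_one (by positivity)] at h2
        exact h2
      have hsum : |∑ i, a i * |x i| ^ β| ≤ Ca * ‖x‖ ^ β := by
        refine (abs_sum_le_sum_abs _ _).trans ?_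
        rw [hCa, sum_mul]
        apply sum_le_sum
        intro i _
        rw [abs_mul, abs_of_nonneg (by positivity : 0 ≤ |x i| ^ β)]
        have := PiLp.norm_apply_le x i
        rw [Real.norm_eq_abs] at this
        have : 0 ≤ β := by linarith
        gcongr
      have hββ2 : ‖x‖ ^ β ≤ ‖x‖ ^ β' :=
        Real.rpow_le_rpow_of_exponent_ge hxn (hx.le.trans (min_le_right _ _)) hββ
      have : |K x - 1| ≤ (Ca + 1) * ‖x‖ ^ β := by
        rw [e1, show 1 + (∑ i, a i * |x i| ^ β) + R x - 1 = (∑ i, a i * |x i| ^ β) + R x by ring]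
        refine (abs_add_le _ _).trans ?_
        linarith
      refine this.trans ?_
      gcongr
      have : 0 ≤ (K1 + 1) * (1 + δ' ^ (-β')) := by positivity
      linarith
    · have h1 : 1 ≤ δ' ^ (-β') * ‖x‖ ^ β' := by
        calc 1 = δ' ^ (-β') * δ' ^ β' := by
              rw [← Real.rpow_add hδ'0]; simp
          _ ≤ _ := by gcongr
      calc |K x - 1| ≤ (K1 + 1) * 1 := by simpa using hb x
        _ ≤ (K1 + 1) * (δ' ^ (-β') * ‖x‖ ^ β') := by gcongr
        _ ≤ _ := by
          have : 0 ≤ (K1 + 1 + Ca + 1) * ‖x‖ ^ β' := by positivity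
          linarith

lemma K_periodic {n k : ℕ} {β : ℝ} {a : Fin n → ℝ} {K : EuclideanSpace ℝ (Fin n) → ℝ}
    (hK : KHyp n k β a K) (z : Fin n → ℤ) (hz : ∀ j : Fin n, k ≤ (j : ℕ) → z j = 0)
    (v : EuclideanSpace ℝ (Fin n)) (hv : ∀ j, v j = z j) (x : EuclideanSpace ℝ (Fin n)) :
    K (x + v) = K x := by
  obtain ⟨-, -, -, hper, -⟩ := hK
  have hv' : v = ∑ j, z j • EuclideanSpace.single j (1 : ℝ) := by
    ext t
    simp [hv, Finset.sum_apply, Pi.single_apply]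
  rw [hv']
  have : ∀ t : Finset (Fin n), Function.Periodic K (∑ j ∈ t, z j • EuclideanSpace.single j (1 : ℝ)) := by
    intro t
    induction t using Finset.induction_on with
    | empty => simp [Function.Periodic]
    | insert j t hj ih =>
      rw [sum_insert hj]
      refine Function.Periodic.add_period ?_ ih
      by_cases hjk : (j : ℕ) < k
      · exact Function.Periodic.zsmul (fun x => hper x j hjk) (z j)
      · rw [hz j (by omega)]; simp [Function.Periodic]
  exact this univ x

end S8

end

open Finset in
lemma S8.int_HH (n : ℕ) (ι : Type*) [Fintype ι] [DecidableEq ι] (X : ι → EuclideanSpace ℝ (Fin n))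
    (d τ e M : ℝ) (r : ι) (he : (n : ℝ) < e)
    (hM : ∑ i ∈ univ.erase r, (‖X i - X r‖ / d) ^ (-τ) ≤ M) :
    MeasureTheory.Integrable (fun x : EuclideanSpace ℝ (Fin n) =>
      S8.HH (fun i => 1 + ‖x - X i‖) (fun i j => ‖X i - X j‖) d τ e r) ∧
    ∫ x : EuclideanSpace ℝ (Fin n),
      S8.HH (fun i => 1 + ‖x - X i‖) (fun i j => ‖X i - X j‖) d τ e r ≤
      (1 + M) * ∫ x : EuclideanSpace ℝ (Fin n), (1 + ‖x‖) ^ (-e) := by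
  have hIg : MeasureTheory.Integrable (fun x : EuclideanSpace ℝ (Fin n) => (1 + ‖x‖) ^ (-e)) :=
    integrable_one_add_norm (by simpa using he)
  have hIg2 : ∀ i, MeasureTheory.Integrable (fun x : EuclideanSpace ℝ (Fin n) =>
      S8.wt (fun i j => ‖X i - X j‖) d τ r i * (1 + ‖x - X i‖) ^ (-e)) := by
    intro i
    exact (hIg.comp_sub_right (X i)).const_mul _
  unfold S8.HH
  refine ⟨MeasureTheory.integrable_finsetSum _ fun i _ => hIg2 i, ?_⟩
  rw [MeasureTheory.integral_finsetSum _ fun i _ => hIg2 i]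
  have : ∀ i, ∫ x : EuclideanSpace ℝ (Fin n),
      S8.wt (fun i j => ‖X i - X j‖) d τ r i * (1 + ‖x - X i‖) ^ (-e) =
      S8.wt (fun i j => ‖X i - X j‖) d τ r i * ∫ x : EuclideanSpace ℝ (Fin n), (1 + ‖x‖) ^ (-e) := by
    intro i
    rw [MeasureTheory.integral_const_mul]
    congr 1
    exact MeasureTheory.integral_sub_right_eq_self
      (fun x : EuclideanSpace ℝ (Fin n) => (1 + ‖x‖) ^ (-e)) (X i)
  simp only [this]
  rw [← sum_mul]
  have h0 : 0 ≤ ∫ x : EuclideanSpace ℝ (Fin n), (1 + ‖x‖) ^ (-e) :=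
    MeasureTheory.integral_nonneg fun x => by positivity
  gcongr
  rw [← add_sum_erase _ _ (mem_univ r)]
  apply add_le_add
  · simp [S8.wt]
  · refine le_trans (le_of_eq ?_) hM
    apply sum_congr rfl
    intro i hi
    simp [S8.wt, (mem_erase.1 hi).1]

set_option maxHeartbeats 4000000 in
theorem stmt_8 (n k : ℕ) (s β τ C₀ C₁ C₂ : ℝ) (hn0 : 0 < n) (hs0 : 0 < s) (hs1 : s < 1)
    (hn : 2 * s + 2 < (n : ℝ)) (hk1 : 1 ≤ k) (hk2 : (k : ℝ) < ((n : ℝ) - 2 * s) / 2)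
    (hβ1 : (n : ℝ) - 2 * s < β) (hβ2 : β < (n : ℝ))
    (hτ1 : (k : ℝ) < τ) (hτ2 : τ < ((n : ℝ) - 2 * s) / 2)
    (hC₀ : 0 < C₀) (hC₁ : 0 < C₁) (hC₁₂ : C₁ < C₂)
    (a : Fin n → ℝ) (K : EuclideanSpace ℝ (Fin n) → ℝ) (hK : KHyp n k β a K) :
    ∃ C > (0 : ℝ), ∃ l₀ : ℕ, ∀ l : ℕ, l₀ < l → ∀ m : ℕ, 1 ≤ m →
      ∀ lam : ℝ, lam = (l : ℝ) ^ (((n : ℝ) - 2 * s) / (β - (n : ℝ) + 2 * s)) →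
      ∀ X : Fin ((m + 1) ^ k) → EuclideanSpace ℝ (Fin n), latticeEnum n k m (lam * l) X →
      ∀ P : Fin ((m + 1) ^ k) → EuclideanSpace ℝ (Fin n), (∀ i, ‖P i - X i‖ < 1 / 2) →
      ∀ Λ : Fin ((m + 1) ^ k) → ℝ, (∀ i, Λ i ∈ Set.Icc C₁ C₂) →
      ∀ γ W : EuclideanSpace ℝ (Fin n) → ℝ,
      (∀ y, γ y = min (⨅ i, ((1 + ‖y - X i‖) / lam) ^ (τ - s)) 1) →
      (∀ y, W y = ∑ i, C₀ * (Λ i / (1 + Λ i ^ 2 * ‖y - P i‖ ^ 2)) ^ (((n : ℝ) - 2 * s) / 2)) →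
      ∀ r : Fin ((m + 1) ^ k), ∀ Z : EuclideanSpace ℝ (Fin n) → ℝ,
      -- `Z = Z_{r,t}` for some `t ∈ {1, …, n+1}`: either a derivative in a coordinate of the
      -- center `P^r`, or the derivative in the parameter `Λ_r`.
      ((∃ t : Fin n, ∀ x, Z x =
          deriv (fun b : ℝ => C₀ * (Λ r /
            (1 + Λ r ^ 2 * ‖x - (P r + b • EuclideanSpace.single t (1 : ℝ))‖ ^ 2)) ^
              (((n : ℝ) - 2 * s) / 2)) 0) ∨
        (∀ x, Z x =
          deriv (fun b : ℝ => C₀ * (b / (1 + b ^ 2 * ‖x - P r‖ ^ 2)) ^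
            (((n : ℝ) - 2 * s) / 2)) (Λ r))) →
      ∀ φ : EuclideanSpace ℝ (Fin n) → ℝ, ∀ nφ : ℝ,
      -- `nφ` is any upper bound for the weighted norm `‖φ‖_*`
      (∀ y, |φ y| ≤ nφ * (γ y * ∑ i, (1 + ‖y - X i‖) ^ (-(((n : ℝ) - 2 * s) / 2 + τ)))) →
      -- orthogonality condition
      (∫ x : EuclideanSpace ℝ (Fin n),
          (C₀ * (Λ r / (1 + Λ r ^ 2 * ‖x - P r‖ ^ 2)) ^ (((n : ℝ) - 2 * s) / 2)) ^
              (4 * s / ((n : ℝ) - 2 * s)) * Z x * φ x) = 0 →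
      |∫ x : EuclideanSpace ℝ (Fin n),
          K (lam⁻¹ • x) * W x ^ (4 * s / ((n : ℝ) - 2 * s)) * Z x * φ x| ≤
        C * nφ * lam ^ (-(τ - s)) * (lam * l) ^ (-((n : ℝ) / 2)) := by
  
  classical
  set ν : ℝ := (n : ℝ) with hνdef
  set N : ℝ := ν - 2 * s with hN
  set p : ℝ := 4 * s / N with hp
  have hNpos : 0 < N := by linarith
  have hk1' : (1 : ℝ) ≤ k := by exact_mod_cast hk1
  have hν4 : 4 * s < ν := by linarith
  have hp0 : 0 < p := by positivity
  have hpN : p * N = 4 * s := by rw [hp]; field_simp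
  have hp2 : p < 2 := by rw [hp, div_lt_iff₀ hNpos]; linarith
  have hτ0 : 0 < τ := by linarith
  have hsτ : s ≤ τ := by linarith
  set q : ℝ := ν / (2 * N) with hq
  have hqN : q * N = ν / 2 := by rw [hq]; field_simp
  set β' : ℝ := β * q with hβ'
  have hβ0 : 0 < β := by linarith
  have hν0 : 0 < ν := by linarith
  have hq0 : 0 < q := by positivity
  have hβ'0 : 0 < β' := by positivity
  have hq1 : q ≤ 1 := by rw [hq, div_le_one (by positivity)]; linarith
  have hββ : β' ≤ β := by rw [hβ']; nlinarith
  have hβ'2 : β' < ν / 2 + 2 * s := by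
    have h1 : β' < ν * q := by rw [hβ']; gcongr
    have h2 : ν * q ≤ ν / 2 + 2 * s := by
      rw [hq, mul_div_assoc', div_le_iff₀ (by positivity)]
      nlinarith [mul_pos hs0 (sub_pos.2 hν4)]
    linarith
  have hτp : τ * (1 + p) < ν / 2 + s := by
    have h1 : τ * (1 + p) < N / 2 * (1 + p) := by gcongr
    have h2 : N / 2 * (1 + p) = ν / 2 + s := by
      have : N / 2 * (1 + p) = N / 2 + (p * N) / 2 := by ring
      rw [this, hpN, hN]; ring
    linarith
  set ε : ℝ := min (2 * s) (min (ν / 2 + s - τ * (1 + p)) (ν / 2 + 2 * s - β')) with hε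
  have hε0 : 0 < ε := by
    rw [hε]; refine lt_min (by linarith) (lt_min (by linarith) (by linarith))
  have hε1 : ε ≤ 2 * s := min_le_left _ _
  have hε2 : ε ≤ ν / 2 + s - τ * (1 + p) := (min_le_right _ _).trans (min_le_left _ _)
  have hε3' : ε ≤ ν / 2 + 2 * s - β' := (min_le_right _ _).trans (min_le_right _ _)
  have hε3 : β' + ε ≤ ν / 2 + 2 * s := by linarith
  have hkn : k ≤ n := by
    have : (k : ℝ) ≤ (n : ℝ) := by rw [← hνdef]; linarith
    exact_mod_cast this
  obtain ⟨M, hM1, hlat⟩ := S8.lattice_sum n k τ hkn hτ1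
  obtain ⟨c, hc, Cu, hCu, hbub⟩ :=
    S8.bubble_bounds (E := EuclideanSpace ℝ (Fin n)) hC₀ hC₁ hC₁₂ hNpos
  obtain ⟨K1, hK1, CK, hCK, hKb, hKb1, hKb2⟩ := S8.K_bound hK hβ'0 hββ
  obtain ⟨Cp, hCp, hpt⟩ := S8.pointwise_bound ν s N p q τ β' ε c Cu K1 CK M hτ0 hM1 rfl hpN hp0 hp2
    hs0 hν4 hsτ hτ2 hqN hε1 hε2 hε3 hc hCu hK1 hCK
  set I : ℝ := ∫ x : EuclideanSpace ℝ (Fin n), (1 + ‖x‖) ^ (-(ν + ε)) with hI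
  have hI0 : 0 ≤ I := MeasureTheory.integral_nonneg fun x => by positivity
  have hC₂0 : 0 < C₂ := by linarith
  set CZ : ℝ := N / 2 * (C₂ + C₁⁻¹) * Cu with hCZ
  have hCZ0 : 0 < CZ := by positivity
  have hKcont : Continuous K := hK.2.1.continuous
  refine ⟨CZ * Cp * ((1 + M) * I) + 1, by positivity, 0, ?_⟩
  intro l hl m hm lam hlam X hX P hP Λ hΛ γ W hγ hW r Z hZ φ nφ hφ horth
  -- parameters
  have hl1 : (1 : ℝ) ≤ l := by exact_mod_cast hl
  have hβN : 0 < β - ν + 2 * s := by linarith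
  have hlam1 : 1 ≤ lam := by
    rw [hlam]; exact Real.one_le_rpow hl1 (by positivity)
  have hlam0 : 0 < lam := by linarith
  set d : ℝ := lam * l with hd
  have hlamd : lam ≤ d := by rw [hd]; nlinarith
  have hd1 : 1 ≤ d := by linarith
  have hd0 : 0 < d := by linarith
  have hl0 : (0:ℝ) < l := by linarith
  have hlamβ : lam ^ (-β') = d ^ (-(ν / 2)) := by
    have e1 : d = (l:ℝ) ^ (β / (β - ν + 2 * s)) := by
      rw [hd, hlam, ← Real.rpow_add_one hl0.ne']
      congr 1; field_simp; rw [hN]; ring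
    rw [e1, hlam, ← Real.rpow_mul hl0.le, ← Real.rpow_mul hl0.le]
    congr 1
    rw [hβ', ← hqN]; field_simp
  obtain ⟨hD, hM⟩ := hlat m d X hd0 hX
  -- brackets
  have hγ1 : ∀ y, γ y ≤ 1 := fun y => by rw [hγ]; exact min_le_right _ _
  have hAd : ∀ y i, ((1 + ‖y - X i‖) / lam) ^ (τ - s) =
      lam ^ (-(τ - s)) * (1 + ‖y - X i‖) ^ (τ - s) := by
    intro y i
    rw [Real.div_rpow (by positivity) hlam0.le, Real.rpow_neg hlam0.le]; field_simp
  have hγ2 : ∀ y i, γ y ≤ lam ^ (-(τ - s)) * (1 + ‖y - X i‖) ^ (τ - s) := by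
    intro y i
    rw [← hAd, hγ]
    exact (min_le_left _ _).trans (ciInf_le (Set.finite_range _).bddBelow i)
  have hγ0 : ∀ y, 0 < γ y := by
    intro y
    rw [hγ]
    refine lt_min ?_ one_pos
    have : Nonempty (Fin ((m + 1) ^ k)) := ⟨r⟩
    obtain ⟨i, hi⟩ := exists_eq_ciInf_of_finite
      (f := fun i => ((1 + ‖y - X i‖) / lam) ^ (τ - s))
    rw [← hi]
    positivity
  have hS0 : ∀ y, 0 < ∑ i, (1 + ‖y - X i‖) ^ (-(N / 2 + τ)) := by
    intro y
    exact Finset.sum_pos (fun i _ => by positivity) ⟨r, Finset.mem_univ r⟩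
  have hnφ : 0 ≤ nφ := by
    by_contra h
    push Not at h
    have h1 := hφ 0
    have h2 := mul_neg_of_neg_of_pos h (mul_pos (hγ0 0) (hS0 0))
    linarith [abs_nonneg (φ 0)]
  have hΛr : 0 < Λ r := by have := (hΛ r).1; linarith
  -- Z bound
  have hZb : ∀ x, |Z x| ≤ CZ * (1 + ‖x - X r‖) ^ (-N) := by
    intro x
    have hU := (hbub x (P r) (X r) (Λ r) (hP r) (hΛ r)).2
    have hc2 := (hΛ r).2
    have hc1 := (hΛ r).1
    have hU0 : 0 ≤ C₀ * (Λ r / (1 + Λ r ^ 2 * ‖x - P r‖ ^ 2)) ^ (N / 2) := by positivity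
    have hinv : (Λ r)⁻¹ ≤ C₁⁻¹ := by gcongr
    have hC1i : 0 < C₁⁻¹ := by positivity
    rcases hZ with ⟨t, ht⟩ | ht
    · rw [ht x]
      refine (S8.Z_center C₀ (Λ r) (N / 2) hC₀ hΛr (by positivity) x (P r) t).trans ?_
      rw [hCZ, mul_assoc (N / 2 * (C₂ + C₁⁻¹))]
      gcongr
      linarith
    · rw [ht x]
      refine (S8.Z_scale C₀ (Λ r) (N / 2) ‖x - P r‖ hC₀ hΛr (by positivity)).trans ?_
      rw [hCZ, mul_assoc (N / 2 * (C₂ + C₁⁻¹))]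
      gcongr
      linarith
  have hRHS : 0 ≤ (CZ * Cp * ((1 + M) * I) + 1) * nφ * lam ^ (-(τ - s)) * d ^ (-(ν / 2)) := by
    positivity
  set U : EuclideanSpace ℝ (Fin n) → ℝ := fun x =>
    C₀ * (Λ r / (1 + Λ r ^ 2 * ‖x - P r‖ ^ 2)) ^ (N / 2) with hUdef
  set V : EuclideanSpace ℝ (Fin n) → ℝ := fun x => ∑ i ∈ Finset.univ.erase r,
    C₀ * (Λ i / (1 + Λ i ^ 2 * ‖x - P i‖ ^ 2)) ^ (N / 2) with hVdef
  have hWUV : ∀ x, W x = U x + V x := by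
    intro x
    rw [hW, ← Finset.add_sum_erase _ _ (Finset.mem_univ r)]
  have hΛi : ∀ i, 0 < Λ i := fun i => by have := (hΛ i).1; linarith
  have hbubcont : ∀ i, Continuous fun x : EuclideanSpace ℝ (Fin n) =>
      C₀ * (Λ i / (1 + Λ i ^ 2 * ‖x - P i‖ ^ 2)) ^ (N / 2) := by
    intro i
    refine continuous_const.mul (Continuous.rpow_const ?_ fun x => Or.inr (by positivity))
    refine continuous_const.div (by fun_prop) fun x => ?_
    positivity
  have hUcont : Continuous U := hbubcont r
  have hVcont : Continuous V := continuous_finsetSum _ fun i _ => hbubcont i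
  have hU0 : ∀ x, 0 < U x := by
    intro x; simp only [hUdef]; positivity
  have hV0 : ∀ x, 0 ≤ V x := by
    intro x
    exact Finset.sum_nonneg fun i _ => by have := hΛi i; positivity
  have hV1 : ∀ x, V x ≤ Cu * ∑ i ∈ Finset.univ.erase r, (1 + ‖x - X i‖) ^ (-N) := by
    intro x
    rw [Finset.mul_sum]
    exact Finset.sum_le_sum fun i _ => (hbub x (P i) (X i) (Λ i) (hP i) (hΛ i)).2
  -- K
  have hKr : ∀ x, K (lam⁻¹ • x) = K (lam⁻¹ • (x - X r)) := by
    intro x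
    obtain ⟨z, hz1, hz2, hz3⟩ := hX.2.1 r
    have := S8.K_periodic hK (fun j => (l : ℤ) * z j) (fun j hj => by simp [hz2 j hj])
      (lam⁻¹ • X r) (fun j => by
        simp only [PiLp.smul_apply, smul_eq_mul, hz3, hd]; push_cast; field_simp)
      (lam⁻¹ • (x - X r))
    rw [← this, ← smul_add, sub_add_cancel]
  have hK3 : ∀ x, |K (lam⁻¹ • x) - 1| ≤ CK * ((1 + ‖x - X r‖) / lam) ^ β' := by
    intro x
    rw [hKr]
    refine (hKb2 _).trans ?_
    rw [norm_smul, norm_inv, Real.norm_of_nonneg hlam0.le, inv_mul_eq_div]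
    gcongr
    linarith
  set F : EuclideanSpace ℝ (Fin n) → ℝ := fun x => K (lam⁻¹ • x) * W x ^ p * Z x * φ x with hF
  set G : EuclideanSpace ℝ (Fin n) → ℝ := fun x => U x ^ p * Z x * φ x with hG
  by_cases hmeas : MeasureTheory.AEStronglyMeasurable F MeasureTheory.volume
  swap
  · rw [MeasureTheory.integral_non_aestronglyMeasurable hmeas, abs_zero]
    exact hRHS
  -- measurability
  have hWcont : Continuous fun x => K (lam⁻¹ • x) * W x ^ p := by
    have h1 : Continuous W := by
      rw [show W = fun x => U x + V x from funext hWUV]; exact hUcont.add hVcont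
    exact (hKcont.comp (continuous_const_smul _)).mul (h1.rpow_const fun x => Or.inr hp0.le)
  have hWne : ∀ x, K (lam⁻¹ • x) * W x ^ p ≠ 0 := by
    intro x
    have h1 := (hKb (lam⁻¹ • x)).1
    have h2 : 0 < W x := by rw [hWUV]; linarith [hU0 x, hV0 x]
    positivity
  have hZφ : MeasureTheory.AEStronglyMeasurable (fun x => Z x * φ x) MeasureTheory.volume := by
    have h1 := ((hWcont.inv₀ hWne).aestronglyMeasurable
      (μ := MeasureTheory.volume)).mul hmeas
    refine h1.congr (Filter.Eventually.of_forall fun x => ?_)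
    simp only [Pi.mul_apply, Pi.inv_apply, hF]
    have := hWne x
    rw [mul_assoc (K (lam⁻¹ • x) * W x ^ p), inv_mul_cancel_left₀ this]
  have hGmeas : MeasureTheory.AEStronglyMeasurable G MeasureTheory.volume := by
    have h1 := ((hUcont.rpow_const fun x => Or.inr hp0.le).aestronglyMeasurable
      (μ := MeasureTheory.volume)).mul hZφ
    refine h1.congr (Filter.Eventually.of_forall fun x => ?_)
    simp only [Pi.mul_apply, hG]
    ring
  have hGint : MeasureTheory.Integrable G MeasureTheory.volume := by
    have hIg : MeasureTheory.Integrable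
        (fun x : EuclideanSpace ℝ (Fin n) => (1 + ‖x‖) ^ (-(ν + 2 * s))) :=
      integrable_one_add_norm (by simp only [finrank_euclideanSpace, Fintype.card_fin]; linarith)
    refine ((hIg.comp_sub_right (X r)).const_mul
      (Cu ^ p * CZ * (nφ * ∑ i : Fin ((m + 1) ^ k), (1:ℝ)))).mono' hGmeas
      (Filter.Eventually.of_forall fun x => ?_)
    have hu := (hbub x (P r) (X r) (Λ r) (hP r) (hΛ r)).2
    have hA0 : 0 < 1 + ‖x - X r‖ := by positivity
    have h1 : U x ^ p ≤ Cu ^ p * ((1 + ‖x - X r‖) ^ (-N)) ^ p := by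
      rw [← Real.mul_rpow hCu.le (by positivity)]
      exact Real.rpow_le_rpow (hU0 x).le hu hp0.le
    have h2 : |φ x| ≤ nφ * ∑ i : Fin ((m + 1) ^ k), (1:ℝ) := by
      refine (hφ x).trans ?_
      have hs1 : ∑ i, (1 + ‖x - X i‖) ^ (-(N / 2 + τ)) ≤ ∑ i : Fin ((m + 1) ^ k), (1:ℝ) := by
        apply Finset.sum_le_sum
        intro i _
        apply Real.rpow_le_one_of_one_le_of_nonpos
        · have := norm_nonneg (x - X i); linarith
        · linarith
      refine mul_le_mul_of_nonneg_left ?_ hnφ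
      exact (mul_le_of_le_one_left (hS0 x).le (hγ1 x)).trans hs1
    rw [Real.norm_eq_abs]
    simp only [hG]
    rw [abs_mul, abs_mul, abs_of_nonneg (Real.rpow_nonneg (hU0 x).le p)]
    calc U x ^ p * |Z x| * |φ x| ≤ (Cu ^ p * ((1 + ‖x - X r‖) ^ (-N)) ^ p) *
          (CZ * (1 + ‖x - X r‖) ^ (-N)) * (nφ * ∑ i : Fin ((m + 1) ^ k), (1:ℝ)) := by
          have := hZb x
          gcongr
      _ = Cu ^ p * CZ * (nφ * ∑ i : Fin ((m + 1) ^ k), (1:ℝ)) *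
          (((1 + ‖x - X r‖) ^ (-N)) ^ p * (1 + ‖x - X r‖) ^ (-N)) := by ring
      _ = _ := by
          rw [← Real.rpow_mul hA0.le, ← Real.rpow_add hA0]
          congr 2; linarith
  obtain ⟨hHint, hHle⟩ := S8.int_HH n (Fin ((m + 1) ^ k)) X d τ (ν + ε) M r (by linarith) (hM r)
  set H : EuclideanSpace ℝ (Fin n) → ℝ := fun x =>
    S8.HH (fun i => 1 + ‖x - X i‖) (fun i j => ‖X i - X j‖) d τ (ν + ε) r with hHdef
  set B : ℝ := lam ^ (-(τ - s)) * d ^ (-(ν / 2)) with hB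
  have hFG : ∀ x, ‖F x - G x‖ ≤ CZ * nφ * Cp * B * H x := by
    intro x
    have hb := hbub x (P r) (X r) (Λ r) (hP r) (hΛ r)
    have h1 := hpt ((m + 1) ^ k) (fun i => 1 + ‖x - X i‖) (fun i j => ‖X i - X j‖) d lam (γ x) r
      (U x) (V x) (K (lam⁻¹ • x)) (fun i => by have := norm_nonneg (x - X i); linarith) hd1 hD
      (fun i j => by
        have := norm_sub_le (x - X j) (x - X i)
        rw [sub_sub_sub_cancel_left] at this
        linarith) hM hlamβ hlam0 hlamd (hγ0 x).le (hγ1 x) (hγ2 x) hb.1 hb.2 (hV0 x) (hV1 x)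
      (hKb _).1.le (hKb _).2 (hKb1 _) (hK3 x)
    have e1 : F x - G x = (K (lam⁻¹ • x) * (U x + V x) ^ p - U x ^ p) * Z x * φ x := by
      simp only [hF, hG, hWUV]; ring
    rw [e1, Real.norm_eq_abs, abs_mul, abs_mul]
    calc |K (lam⁻¹ • x) * (U x + V x) ^ p - U x ^ p| * |Z x| * |φ x|
        ≤ |K (lam⁻¹ • x) * (U x + V x) ^ p - U x ^ p| * (CZ * (1 + ‖x - X r‖) ^ (-N)) *
          (nφ * (γ x * ∑ i, (1 + ‖x - X i‖) ^ (-(N / 2 + τ)))) := by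
          have := hZb x
          have := hφ x
          gcongr
      _ = CZ * nφ * (|K (lam⁻¹ • x) * (U x + V x) ^ p - U x ^ p| * (1 + ‖x - X r‖) ^ (-N) * γ x *
          ∑ i, (1 + ‖x - X i‖) ^ (-(N / 2 + τ))) := by ring
      _ ≤ CZ * nφ * (Cp * (lam ^ (-(τ - s)) * (d ^ (-(ν / 2)) * H x))) := by
          gcongr
      _ = _ := by rw [hB]; ring
  have hbint : MeasureTheory.Integrable (fun x => CZ * nφ * Cp * B * H x) := hHint.const_mul _
  have hFGint : MeasureTheory.Integrable (fun x => F x - G x) :=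
    hbint.mono' (hmeas.sub hGmeas) (Filter.Eventually.of_forall hFG)
  have hsplit : ∫ x, F x = ∫ x, (F x - G x) := by
    have h1 := MeasureTheory.integral_add hFGint hGint
    simp only [sub_add_cancel] at h1
    rw [h1]
    have : ∫ x, G x = 0 := horth
    rw [this, add_zero]
  rw [hsplit]
  have hfin := MeasureTheory.norm_integral_le_of_norm_le hbint (Filter.Eventually.of_forall hFG)
  rw [Real.norm_eq_abs, MeasureTheory.integral_const_mul] at hfin
  refine hfin.trans ?_
  have hB0 : 0 ≤ B := by positivity
  calc CZ * nφ * Cp * B * ∫ x, H x ≤ CZ * nφ * Cp * B * ((1 + M) * I) := by gcongr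
    _ = (CZ * Cp * ((1 + M) * I)) * nφ * B := by ring
    _ ≤ (CZ * Cp * ((1 + M) * I) + 1) * nφ * B := by gcongr; linarith
    _ = _ := by rw [hB]; ring
end

section
/- Define, for a function φ : ℝ^n → ℝ, N(φ)(x) = K(x/λ) ( ((W_m+φ)(x))_+^{(n+2s)/(n−2s)} − W_m(x)^{(n+2s)/(n−2s)} − ((n+2s)/(n−2s)) W_m(x)^{4s/(n−2s)} φ(x) ), where t_+ = max{t,0}. Then there exists a constant C > 0 independent of m such that for every φ with ‖φ‖_* ≤ 1: ‖N(φ)‖_{**} ≤ C ‖φ‖_*^{min{2, (n+2s)/(n−2s)}}. -/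
section Aux
open Finset

lemma aux_tangent (p : ℝ) (hp : 1 ≤ p) (a b : ℝ) (ha : 0 ≤ a) (hb : 0 ≤ b) :
    a ^ p + p * a ^ (p - 1) * (b - a) ≤ b ^ p := by
  rcases ha.eq_or_lt with h | h
  · subst h
    rcases hp.eq_or_lt with h1 | h1
    · subst h1; simp
    · rw [Real.zero_rpow (by linarith), Real.zero_rpow (by linarith)]
      simpa using Real.rpow_nonneg hb p
  · have h1 := one_add_mul_self_le_rpow_one_add (s := b / a - 1)
      (by have := div_nonneg hb ha; linarith) hp
    have h2 : 1 + (b / a - 1) = b / a := by ring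
    rw [h2, Real.div_rpow hb ha, le_div_iff₀ (Real.rpow_pos_of_pos h p)] at h1
    have h3 : a ^ p = a ^ (p - 1) * a := by
      rw [Real.rpow_sub_one h.ne']; field_simp
    refine le_trans (le_of_eq ?_) h1
    rw [h3]; field_simp

lemma aux_D (p : ℝ) (hp : 1 < p) (w f : ℝ) (hw : 0 ≤ w) :
    |max (w + f) 0 ^ p - w ^ p - p * w ^ (p - 1) * f|
      ≤ p * |max (w + f) 0 ^ (p - 1) - w ^ (p - 1)| * |f| := by
  set b := max (w + f) 0 with hb
  have hb0 : 0 ≤ b := le_max_right _ _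
  have hbf : w + f ≤ b := le_max_left _ _
  have h1 := aux_tangent p hp.le w b hw hb0
  have h2 := aux_tangent p hp.le b w hb0 hw
  have hwp : 0 ≤ w ^ (p - 1) := Real.rpow_nonneg hw _
  have hpw : 0 ≤ p * w ^ (p - 1) := by positivity
  have h3 : p * w ^ (p - 1) * f ≤ p * w ^ (p - 1) * (b - w) :=
    mul_le_mul_of_nonneg_left (by linarith) hpw
  have h4 : p * b ^ (p - 1) * (w - b) = p * b ^ (p - 1) * (-f) := by
    rcases le_total (w + f) 0 with h | h
    · have : b = 0 := by rw [hb]; exact max_eq_right h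
      rw [this, Real.zero_rpow (by linarith)]; ring
    · have : b = w + f := by rw [hb]; exact max_eq_left h
      rw [this]; ring
  rw [abs_of_nonneg (by linarith), mul_assoc p |_| _, ← abs_mul]
  have h5 : b ^ p - w ^ p - p * w ^ (p - 1) * f ≤ p * ((b ^ (p - 1) - w ^ (p - 1)) * f) := by
    rw [h4] at h2; linarith
  exact h5.trans (mul_le_mul_of_nonneg_left (le_abs_self _) (by linarith))

lemma aux_bw (w f : ℝ) (hw : 0 ≤ w) : |max (w + f) 0 - w| ≤ |f| := by
  rcases le_total (w + f) 0 with h | h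
  · rw [max_eq_right h, zero_sub, abs_neg, abs_of_nonneg hw, abs_of_nonpos (by linarith)]; linarith
  · rw [max_eq_left h]; simp

lemma aux_small (q : ℝ) (hq0 : 0 ≤ q) (hq : q ≤ 1) (a b : ℝ) (ha : 0 ≤ a) (hb : 0 ≤ b) :
    |a ^ q - b ^ q| ≤ |a - b| ^ q := by
  wlog h : b ≤ a generalizing a b
  · rw [abs_sub_comm, abs_sub_comm a]; exact this b a hb ha (le_of_not_ge h)
  have h1 := Real.rpow_add_le_add_rpow hb (sub_nonneg.2 h) hq0 hq
  rw [add_sub_cancel] at h1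
  have h2 := Real.rpow_le_rpow hb h hq0
  rw [abs_of_nonneg (by linarith), abs_of_nonneg (by linarith)]
  linarith

lemma aux_big (q : ℝ) (hq : 1 ≤ q) (a b H : ℝ) (ha : 0 ≤ a) (hb : 0 ≤ b) (haH : a ≤ H)
    (hbH : b ≤ H) : |a ^ q - b ^ q| ≤ q * H ^ (q - 1) * |a - b| := by
  wlog h : b ≤ a generalizing a b
  · rw [abs_sub_comm, abs_sub_comm a]; exact this b a hb ha hbH haH (le_of_not_ge h)
  have h1 := aux_tangent q hq a b ha hb
  have h2 := Real.rpow_le_rpow hb h (by linarith : 0 ≤ q)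
  rw [abs_of_nonneg (by linarith), abs_of_nonneg (by linarith)]
  have h3 : a ^ (q - 1) ≤ H ^ (q - 1) := Real.rpow_le_rpow ha haH (by linarith)
  have h4 : q * a ^ (q - 1) * (a - b) ≤ q * H ^ (q - 1) * (a - b) := by
    gcongr
  linarith

lemma aux_main (p A : ℝ) (hp : 1 < p) (hA : 0 ≤ A) (w f S g ν : ℝ) (hw : 0 ≤ w) (hS : 0 ≤ S)
    (hwS : w ≤ A * S) (hg0 : 0 ≤ g) (hg1 : g ≤ 1) (hν0 : 0 ≤ ν) (hν1 : ν ≤ 1)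
    (hf : |f| ≤ ν * (g * S)) :
    |max (w + f) 0 ^ p - w ^ p - p * w ^ (p - 1) * f|
      ≤ (p + p * (p - 1) * (A + 1) ^ (p - 2)) * ν ^ (min 2 p) * (g * S ^ p) := by
  refine (aux_D p hp w f hw).trans ?_
  have hb0 : 0 ≤ max (w + f) 0 := le_max_right _ _
  have hbw := aux_bw w f hw
  have hc : 0 ≤ (A + 1) ^ (p - 2) := Real.rpow_nonneg (by linarith) _
  have hSp : 0 ≤ S ^ p := Real.rpow_nonneg hS _
  rcases le_or_gt p 2 with h2 | h2
  · rw [min_eq_right h2]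
    have hνp : 0 ≤ ν ^ p := Real.rpow_nonneg hν0 _
    have e1 := aux_small (p - 1) (by linarith) (by linarith) _ w hb0 hw
    have e2 : |max (w + f) 0 - w| ^ (p - 1) ≤ |f| ^ (p - 1) :=
      Real.rpow_le_rpow (abs_nonneg _) hbw (by linarith)
    have e3 : |f| ^ (p - 1) * |f| = |f| ^ p := by
      rcases (abs_nonneg f).eq_or_lt with h | h
      · rw [← h, Real.zero_rpow (by linarith : p ≠ 0)]; simp
      · rw [Real.rpow_sub_one h.ne']; field_simp
    have e4 : |f| ^ p ≤ ν ^ p * (g * S ^ p) := by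
      refine (Real.rpow_le_rpow (abs_nonneg _) hf (by linarith)).trans ?_
      rw [Real.mul_rpow hν0 (by positivity), Real.mul_rpow hg0 hS]
      gcongr
      exact Real.rpow_le_self_of_le_one hg0 hg1 hp.le
    calc _ ≤ p * |f| ^ (p - 1) * |f| := by gcongr; exact e1.trans e2
      _ = p * |f| ^ p := by rw [mul_assoc, e3]
      _ ≤ p * (ν ^ p * (g * S ^ p)) := by gcongr
      _ ≤ _ := by
        rw [← mul_assoc]
        gcongr
        have : 0 ≤ p * (p - 1) * (A + 1) ^ (p - 2) :=
          mul_nonneg (mul_nonneg (by linarith) (by linarith)) hc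
        linarith
  · rw [min_eq_left h2.le]
    have hfS : |f| ≤ S := hf.trans (by
      calc ν * (g * S) ≤ 1 * (1 * S) := by gcongr
        _ = S := by ring)
    have hAS : 0 ≤ A * S := by positivity
    have e1 := aux_big (p - 1) (by linarith) (max (w + f) 0) w ((A + 1) * S) hb0 hw
      (max_le (by have := le_abs_self f; linarith) (by positivity)) (by linarith)
    have e0 : p - 1 - 1 = p - 2 := by ring
    rw [e0, Real.mul_rpow (by linarith) hS] at e1
    have hSS : S ^ (p - 2) * S ^ 2 = S ^ p := by
      rcases hS.eq_or_lt with h | h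
      · rw [← h, Real.zero_rpow (by linarith : p ≠ 0)]; simp
      · rw [← Real.rpow_natCast, ← Real.rpow_add h]; norm_num
    have hS2 : 0 ≤ S ^ (p - 2) := Real.rpow_nonneg hS _
    have hp1 : 0 ≤ p - 1 := by linarith
    have hν2 : ν ^ (2:ℝ) = ν ^ 2 := by norm_cast
    rw [hν2]
    calc _ ≤ p * ((p - 1) * ((A + 1) ^ (p - 2) * S ^ (p - 2)) * |f|) * |f| := by
            gcongr
            exact e1.trans (by gcongr)
      _ = p * (p - 1) * (A + 1) ^ (p - 2) * S ^ (p - 2) * |f| ^ 2 := by ring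
      _ ≤ p * (p - 1) * (A + 1) ^ (p - 2) * S ^ (p - 2) * (ν * (g * S)) ^ 2 := by gcongr
      _ = p * (p - 1) * (A + 1) ^ (p - 2) * ν ^ 2 * (g * g * (S ^ (p - 2) * S ^ 2)) := by ring
      _ ≤ p * (p - 1) * (A + 1) ^ (p - 2) * ν ^ 2 * (g * 1 * (S ^ (p - 2) * S ^ 2)) := by gcongr
      _ = p * (p - 1) * (A + 1) ^ (p - 2) * ν ^ 2 * (g * S ^ p) := by rw [hSS, mul_one]
      _ ≤ _ := by
        gcongr
        linarith

lemma aux_holder {ι : Type*} (s : Finset ι) (r : ι → ℝ) (hr : ∀ i, 1 ≤ r i) (p α τ M : ℝ)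
    (hp : 1 < p) (hM : ∑ i ∈ s, r i ^ (-τ) ≤ M) :
    (∑ i ∈ s, r i ^ (-(α + τ))) ^ p ≤ M ^ (p - 1) * ∑ i ∈ s, r i ^ (-(α * p + τ)) := by
  have hr0 : ∀ i, 0 < r i := fun i => by linarith [hr i]
  have h := Real.inner_le_weight_mul_Lp_of_nonneg s hp.le (fun i => r i ^ (-τ))
    (fun i => r i ^ (-α)) (fun i => Real.rpow_nonneg (hr0 i).le _)
    (fun i => Real.rpow_nonneg (hr0 i).le _)
  have e1 : ∀ i, r i ^ (-τ) * r i ^ (-α) = r i ^ (-(α + τ)) := fun i => by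
    rw [← Real.rpow_add (hr0 i)]; ring_nf
  have e2 : ∀ i, r i ^ (-τ) * (r i ^ (-α)) ^ p = r i ^ (-(α * p + τ)) := fun i => by
    rw [← Real.rpow_mul (hr0 i).le, ← Real.rpow_add (hr0 i)]; ring_nf
  simp only [e1, e2] at h
  have n1 : 0 ≤ ∑ i ∈ s, r i ^ (-τ) := sum_nonneg fun i _ => Real.rpow_nonneg (hr0 i).le _
  have n2 : 0 ≤ ∑ i ∈ s, r i ^ (-(α + τ)) := sum_nonneg fun i _ => Real.rpow_nonneg (hr0 i).le _
  have n3 : 0 ≤ ∑ i ∈ s, r i ^ (-(α * p + τ)) :=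
    sum_nonneg fun i _ => Real.rpow_nonneg (hr0 i).le _
  have h' := Real.rpow_le_rpow n2 h (by linarith : 0 ≤ p)
  rw [Real.mul_rpow (Real.rpow_nonneg n1 _) (Real.rpow_nonneg n3 _), ← Real.rpow_mul n1,
    ← Real.rpow_mul n3, inv_mul_cancel₀ (by linarith : p ≠ 0), Real.rpow_one] at h'
  have e3 : (1 - p⁻¹) * p = p - 1 := by field_simp
  rw [e3] at h'
  refine h'.trans ?_
  gcongr

lemma aux_summable (σ : ℝ) (hσ : 1 < σ) : Summable fun z : ℤ => (1 + |(z:ℝ)|) ^ (-σ) := by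
  have h1 : Summable fun z : ℕ => (1 + |(z:ℝ)|) ^ (-σ) := by
    have := (summable_nat_add_iff 1).2 (Real.summable_nat_rpow.2 (by linarith : -σ < -1))
    refine this.congr fun z => ?_
    rw [abs_of_nonneg (by positivity)]; push_cast; ring_nf
  refine Summable.of_nat_of_neg (by simpa using h1) (by simpa using h1)

lemma aux_1d (σ : ℝ) (hσ : 1 < σ) : ∃ M > 0, ∀ (d t : ℝ) (F : Finset ℤ), 1 ≤ d →
    ∑ q ∈ F, (1 + |t - d * q|) ^ (-σ) ≤ M := by
  have hs := aux_summable σ hσ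
  refine ⟨2 ^ σ * ∑' z : ℤ, (1 + |(z:ℝ)|) ^ (-σ), ?_, ?_⟩
  · have : 0 < ∑' z : ℤ, (1 + |(z:ℝ)|) ^ (-σ) :=
      hs.tsum_pos (fun z => by positivity) 0 (by positivity)
    positivity
  intro d t F hd
  set q0 := ⌊t / d⌋
  have key : ∀ q : ℤ, (1 + |t - d * q|) ^ (-σ) ≤ 2 ^ σ * (1 + |((q - q0 : ℤ):ℝ)|) ^ (-σ) := by
    intro q
    have hd0 : 0 < d := by linarith
    have a1 : |t / d - q| ≤ |t - d * q| := by
      have : t - d * q = d * (t / d - q) := by field_simp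
      rw [this, abs_mul, abs_of_pos hd0]
      nlinarith [abs_nonneg (t / d - q)]
    have a2 : |((q - q0 : ℤ):ℝ)| ≤ |t / d - q| + 1 := by
      have f1 := Int.floor_le (t / d)
      have f2 := Int.lt_floor_add_one (t / d)
      push_cast
      rw [abs_le]
      constructor
      · have := le_abs_self (t / d - q); linarith
      · have := neg_abs_le (t / d - q); linarith
    have a3 : (1 + |((q - q0 : ℤ):ℝ)|) / 2 ≤ 1 + |t - d * q| := by
      have := abs_nonneg (t - d * q); linarith
    calc (1 + |t - d * q|) ^ (-σ) ≤ ((1 + |((q - q0 : ℤ):ℝ)|) / 2) ^ (-σ) :=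
          Real.rpow_le_rpow_of_nonpos (by positivity) a3 (by linarith)
      _ = _ := by
        rw [Real.div_rpow (by positivity) (by norm_num), Real.rpow_neg (by norm_num : (0:ℝ) ≤ 2)]
        field_simp
  have hs' : Summable fun q : ℤ => (1 + |((q - q0 : ℤ):ℝ)|) ^ (-σ) :=
    (Equiv.subRight q0).summable_iff.2 hs
  calc _ ≤ ∑ q ∈ F, 2 ^ σ * (1 + |((q - q0 : ℤ):ℝ)|) ^ (-σ) := sum_le_sum fun q _ => key q
    _ = 2 ^ σ * ∑ q ∈ F, (1 + |((q - q0 : ℤ):ℝ)|) ^ (-σ) := by rw [mul_sum]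
    _ ≤ 2 ^ σ * ∑' q : ℤ, (1 + |((q - q0 : ℤ):ℝ)|) ^ (-σ) := by
      gcongr
      exact hs'.sum_le_tsum F fun q _ => by positivity
    _ = _ := by
      congr 1
      exact (Equiv.subRight q0).tsum_eq fun z : ℤ => (1 + |(z:ℝ)|) ^ (-σ)

lemma aux_lattice (n k : ℕ) (hk : 1 ≤ k) (hkn : k ≤ n) (τ : ℝ) (hτ : (k:ℝ) < τ) :
    ∃ M > 0, ∀ (m : ℕ) (d : ℝ), 1 ≤ d → ∀ X : Fin ((m + 1) ^ k) → EuclideanSpace ℝ (Fin n),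
      latticeEnum n k m d X → ∀ x, ∑ i, (1 + ‖x - X i‖) ^ (-τ) ≤ M := by
  have hk0 : (0:ℝ) < k := by exact_mod_cast hk
  obtain ⟨M, hM, h⟩ := aux_1d (τ / k) ((one_lt_div hk0).2 hτ)
  refine ⟨M ^ k, by positivity, ?_⟩
  intro m d hd X hX x
  obtain ⟨hinj, hq, -⟩ := hX
  choose q hq1 hq2 hq3 using hq
  let e : Fin k → Fin n := Fin.castLE hkn
  let Q : Fin ((m + 1) ^ k) → (Fin k → ℤ) := fun i j => q i (e j)
  have hQinj : Function.Injective Q := by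
    intro a b hab
    apply hinj
    ext j
    rw [hq3, hq3]
    by_cases hj : (j:ℕ) < k
    · have := congrFun hab ⟨j, hj⟩
      have h2 : q a j = q b j := this
      rw [h2]
    · rw [hq2 a j (by omega), hq2 b j (by omega)]
  let G : (Fin k → ℤ) → ℝ := fun z => ∏ j, (1 + |x (e j) - d * (z j : ℝ)|) ^ (-(τ / k))
  have hG0 : ∀ z, 0 ≤ G z := fun z => prod_nonneg fun j _ => by positivity
  have key : ∀ i, (1 + ‖x - X i‖) ^ (-τ) ≤ G (Q i) := by
    intro i
    have b1 : ∀ j, (1 + ‖x - X i‖) ^ (-(τ / k)) ≤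
        (1 + |x (e j) - d * (Q i j : ℝ)|) ^ (-(τ / k)) := by
      intro j
      have : |x (e j) - d * (Q i j : ℝ)| ≤ ‖x - X i‖ := by
        have := PiLp.norm_apply_le (x - X i) (e j)
        rw [Real.norm_eq_abs, PiLp.sub_apply, hq3] at this
        exact this
      apply Real.rpow_le_rpow_of_nonpos (by positivity) (by linarith)
      have : 0 < τ / k := div_pos (by linarith) hk0
      linarith
    calc (1 + ‖x - X i‖) ^ (-τ) = ∏ _j : Fin k, (1 + ‖x - X i‖) ^ (-(τ / k)) := by
          rw [prod_const, card_univ, Fintype.card_fin, ← Real.rpow_natCast,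
            ← Real.rpow_mul (by positivity)]
          congr 1
          field_simp
      _ ≤ _ := prod_le_prod (fun j _ => by positivity) fun j _ => b1 j
  calc _ ≤ ∑ i, G (Q i) := sum_le_sum fun i _ => key i
    _ = ∑ z ∈ univ.image Q, G z := by rw [sum_image fun a _ b _ hab => hQinj hab]
    _ ≤ ∑ z ∈ Fintype.piFinset fun _ : Fin k => Icc (0:ℤ) m, G z := by
      apply sum_le_sum_of_subset_of_nonneg
      · intro z hz
        obtain ⟨i, -, rfl⟩ := mem_image.1 hz
        rw [Fintype.mem_piFinset]
        intro j
        exact mem_Icc.2 (hq1 i (e j) (by simp [e]))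
      · intro z _ _; exact hG0 z
    _ = ∏ j : Fin k, ∑ z ∈ Icc (0:ℤ) m, (1 + |x (e j) - d * (z : ℝ)|) ^ (-(τ / k)) := by
      rw [prod_univ_sum]
    _ ≤ ∏ _j : Fin k, M := prod_le_prod (fun j _ => sum_nonneg fun z _ => by positivity)
        fun j _ => h d _ _ hd
    _ = M ^ k := by simp

lemma aux_bubble {n : ℕ} (C₀ C₁ C₂ α τ L : ℝ) (hC₀ : 0 < C₀) (hC₁ : 0 < C₁) (h1 : C₁ ≤ L)
    (h2 : L ≤ C₂) (hα : 0 ≤ α) (hτ : τ ≤ α) (y X P : EuclideanSpace ℝ (Fin n))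
    (hP : ‖P - X‖ < 1 / 2) :
    C₀ * (L / (1 + L ^ 2 * ‖y - P‖ ^ 2)) ^ α ≤
      C₀ * (5 * C₂ + 2 / C₁) ^ α * (1 + ‖y - X‖) ^ (-(α + τ)) := by
  have hL : 0 < L := by linarith
  have hr : 1 + ‖y - X‖ ≤ 3 / 2 + ‖y - P‖ := by
    have := norm_add_le (y - P) (P - X)
    rw [sub_add_sub_cancel] at this
    linarith
  set ρ := ‖y - P‖
  set r := 1 + ‖y - X‖
  have hρ : 0 ≤ ρ := norm_nonneg _
  have hr1 : 1 ≤ r := by have := norm_nonneg (y - X); simp only [r]; linarith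
  have hr0 : 0 < r := by linarith
  have hB : 0 < 5 * C₂ + 2 / C₁ := by have : 0 < C₂ := by linarith
                                      positivity
  have k1 : r ^ 2 ≤ 5 + 2 * ρ ^ 2 := by nlinarith [sq_nonneg (ρ - 3/2)]
  have k2 : L * r ^ 2 ≤ (5 * C₂ + 2 / C₁) * (1 + L ^ 2 * ρ ^ 2) := by
    have a1 : L ≤ L ^ 2 / C₁ := by rw [le_div_iff₀ hC₁]; nlinarith
    have a2 : L * r ^ 2 ≤ L * (5 + 2 * ρ ^ 2) := by gcongr
    have a3 : L * ρ ^ 2 ≤ L ^ 2 / C₁ * ρ ^ 2 := by gcongr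
    have a4 : 0 ≤ 5 * C₂ * (L ^ 2 * ρ ^ 2) := by have : 0 < C₂ := by linarith
                                                 positivity
    have a5 : 0 < 2 / C₁ := by positivity
    have a6 : (2 / C₁) * (L ^ 2 * ρ ^ 2) = 2 * (L ^ 2 / C₁ * ρ ^ 2) := by ring
    nlinarith
  have k3 : L / (1 + L ^ 2 * ρ ^ 2) ≤ (5 * C₂ + 2 / C₁) / r ^ 2 := by
    rw [div_le_div_iff₀ (by positivity) (by positivity)]; exact k2
  rw [mul_assoc]
  gcongr
  calc _ ≤ ((5 * C₂ + 2 / C₁) / r ^ 2) ^ α := Real.rpow_le_rpow (by positivity) k3 hα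
    _ = (5 * C₂ + 2 / C₁) ^ α * r ^ (-(2 * α)) := by
      rw [Real.div_rpow hB.le (by positivity), Real.rpow_neg hr0.le, Real.rpow_mul hr0.le]
      norm_num [div_eq_mul_inv]
    _ ≤ _ := by
      gcongr
      linarith

end Aux

theorem stmt_14 (n k : ℕ) (s β τ C₀ C₁ C₂ : ℝ) (hn0 : 0 < n) (hs0 : 0 < s) (hs1 : s < 1)
    (hn : 2 * s + 2 < (n : ℝ)) (hk1 : 1 ≤ k) (hk2 : (k : ℝ) < ((n : ℝ) - 2 * s) / 2)
    (hβ1 : (n : ℝ) - 2 * s < β) (hβ2 : β < (n : ℝ))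
    (hτ1 : (k : ℝ) < τ) (hτ2 : τ < ((n : ℝ) - 2 * s) / 2)
    (hC₀ : 0 < C₀) (hC₁ : 0 < C₁) (hC₁₂ : C₁ < C₂)
    (a : Fin n → ℝ) (K : EuclideanSpace ℝ (Fin n) → ℝ) (hK : KHyp n k β a K)
    (l : ℕ) (hl : 1 ≤ l) :
    ∃ C > (0 : ℝ), ∀ m : ℕ, 1 ≤ m →
      ∀ lam : ℝ, lam = (l : ℝ) ^ (((n : ℝ) - 2 * s) / (β - (n : ℝ) + 2 * s)) →
      ∀ X : Fin ((m + 1) ^ k) → EuclideanSpace ℝ (Fin n), latticeEnum n k m (lam * l) X →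
      ∀ P : Fin ((m + 1) ^ k) → EuclideanSpace ℝ (Fin n), (∀ i, ‖P i - X i‖ < 1 / 2) →
      ∀ Λ : Fin ((m + 1) ^ k) → ℝ, (∀ i, Λ i ∈ Set.Icc C₁ C₂) →
      ∀ γ W : EuclideanSpace ℝ (Fin n) → ℝ,
      (∀ y, γ y = min (⨅ i, ((1 + ‖y - X i‖) / lam) ^ (τ - s)) 1) →
      (∀ y, W y = ∑ i, C₀ * (Λ i / (1 + Λ i ^ 2 * ‖y - P i‖ ^ 2)) ^ (((n : ℝ) - 2 * s) / 2)) →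
      ∀ φ : EuclideanSpace ℝ (Fin n) → ℝ, ∀ nφ : ℝ,
      -- `nφ` is any upper bound for `‖φ‖_*` with `nφ ≤ 1` (so in particular `‖φ‖_* ≤ 1`)
      0 ≤ nφ → nφ ≤ 1 →
      (∀ y, |φ y| ≤ nφ * (γ y * ∑ i, (1 + ‖y - X i‖) ^ (-(((n : ℝ) - 2 * s) / 2 + τ)))) →
      -- pointwise form of `‖N(φ)‖_{**} ≤ C ‖φ‖_*^{min{2, (n+2s)/(n-2s)}}`
      ∀ x : EuclideanSpace ℝ (Fin n),
        |K (lam⁻¹ • x) *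
            (max (W x + φ x) 0 ^ (((n : ℝ) + 2 * s) / ((n : ℝ) - 2 * s)) -
              W x ^ (((n : ℝ) + 2 * s) / ((n : ℝ) - 2 * s)) -
              (((n : ℝ) + 2 * s) / ((n : ℝ) - 2 * s)) *
                W x ^ (4 * s / ((n : ℝ) - 2 * s)) * φ x)| ≤
          C * nφ ^ (min 2 (((n : ℝ) + 2 * s) / ((n : ℝ) - 2 * s))) *
            (γ x * ∑ i, (1 + ‖x - X i‖) ^ (-(((n : ℝ) + 2 * s) / 2 + τ))) := by
  have hα0 : 0 < ((n : ℝ) - 2 * s) / 2 := by linarith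
  have hn2 : 0 < (n : ℝ) - 2 * s := by linarith
  have hkn : k ≤ n := by
    have : (k : ℝ) ≤ n := by linarith
    exact_mod_cast this
  obtain ⟨M, hM, hMb⟩ := aux_lattice n k hk1 hkn τ hτ1
  obtain ⟨⟨K₀, K₁, hK₀, hKb⟩, -⟩ := hK
  have hK₁ : 0 < K₁ := by have := hKb 0; linarith [this.1, this.2]
  set α := ((n : ℝ) - 2 * s) / 2 with hα
  set p := ((n : ℝ) + 2 * s) / ((n : ℝ) - 2 * s) with hpdef
  have hp : 1 < p := by rw [hpdef, lt_div_iff₀ hn2]; linarith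
  have hp1 : 4 * s / ((n : ℝ) - 2 * s) = p - 1 := by
    rw [hpdef, eq_sub_iff_add_eq, div_add_one hn2.ne']; congr 1; ring
  have hαp : ((n : ℝ) + 2 * s) / 2 = α * p := by
    rw [hpdef, hα, div_mul_div_comm, mul_comm (2:ℝ) ((n:ℝ) - 2 * s), mul_div_mul_left _ _ hn2.ne']
  have hB : 0 < 5 * C₂ + 2 / C₁ := by
    have : 0 < C₂ := by linarith
    positivity
  let A : ℝ := C₀ * (5 * C₂ + 2 / C₁) ^ α
  have hA : 0 < A := by positivity
  let D : ℝ := p + p * (p - 1) * (A + 1) ^ (p - 2)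
  have hD : 0 < D := by
    have h1 : 0 < p - 1 := by linarith
    positivity
  refine ⟨K₁ * (D * M ^ (p - 1)), by positivity, ?_⟩
  intro m hm lam hlam X hX P hP Λ hΛ γ W hγ hW φ nφ hν0 hν1 hφ x
  have hl1 : (1 : ℝ) ≤ l := by exact_mod_cast hl
  have hlam1 : 1 ≤ lam := by
    rw [hlam]
    exact Real.one_le_rpow hl1 (div_nonneg hn2.le (by linarith))
  have hd : 1 ≤ lam * l := by nlinarith
  have hsum := hMb m (lam * l) hd X hX x
  have hΛ0 : ∀ i, 0 < Λ i := fun i => lt_of_lt_of_le hC₁ (hΛ i).1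
  have hW0 : 0 ≤ W x := by
    rw [hW]
    refine Finset.sum_nonneg fun i _ => ?_
    have := hΛ0 i
    positivity
  have hWS : W x ≤ A * ∑ i, (1 + ‖x - X i‖) ^ (-(α + τ)) := by
    rw [hW, Finset.mul_sum]
    refine Finset.sum_le_sum fun i _ => ?_
    exact aux_bubble C₀ C₁ C₂ α τ (Λ i) hC₀ hC₁ (hΛ i).1 (hΛ i).2 hα0.le hτ2.le x (X i) (P i) (hP i)
  have hg1 : γ x ≤ 1 := by rw [hγ]; exact min_le_right _ _
  have hg0 : 0 ≤ γ x := by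
    rw [hγ]
    refine le_min (Real.iInf_nonneg fun i => ?_) zero_le_one
    positivity
  have hS0 : 0 ≤ ∑ i, (1 + ‖x - X i‖) ^ (-(α + τ)) :=
    Finset.sum_nonneg fun i _ => by positivity
  have h1 := aux_main p A hp hA.le (W x) (φ x) _ (γ x) nφ hW0 hS0 hWS hg0 hg1 hν0 hν1 (hφ x)
  have h2 := aux_holder Finset.univ (fun i => 1 + ‖x - X i‖)
    (fun i => by have := norm_nonneg (x - X i); linarith) p α τ M hp hsum
  have hν : 0 ≤ nφ ^ (min 2 p) := Real.rpow_nonneg hν0 _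
  rw [hp1, hαp, abs_mul]
  have hKx : |K (lam⁻¹ • x)| ≤ K₁ := by
    have := hKb (lam⁻¹ • x)
    rw [abs_of_nonneg (by linarith [this.1])]
    exact this.2
  calc _ ≤ K₁ * (D * nφ ^ (min 2 p) * (γ x * (∑ i, (1 + ‖x - X i‖) ^ (-(α + τ))) ^ p)) :=
        mul_le_mul hKx h1 (abs_nonneg _) hK₁.le
    _ ≤ K₁ * (D * nφ ^ (min 2 p) *
          (γ x * (M ^ (p - 1) * ∑ i, (1 + ‖x - X i‖) ^ (-(α * p + τ))))) := by
        gcongr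
    _ = _ := by ring
end

section
/- For every ε > 0 there exist a constant C > 0 and an integer l_0 such that for all integers l ≥ l_0, all m, all i, and all admissible P^i, Λ_i: | ∫_{ℝ^n} K(x/λ) U_{P^i,Λ_i}(x)^{(n+2s)/(n−2s)} (∂U_{P^i,Λ_i}/∂Λ_i)(x) dx + ((n−2s)/(2n)) β C_0^{2n/(n−2s)} (Σ_{h=1}^n a_h) Λ_i^{−(β+1)} λ^{−β} ∫_{ℝ^n} |x_1|^β (1+|x|²)^{−n} dx | ≤ C |P^i − X^i|^{min{2, β−1}} λ^{−β} + ε λ^{−β}. -/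
open MeasureTheory

noncomputable def Gf (n : ℕ) (b r : ℝ) : ℝ :=
  n * (b/(1+b^2*r^2))^(n-1) * ((1-b^2*r^2)/(1+b^2*r^2)^2)

lemma den_pos (b r : ℝ) : 0 < 1+b^2*r^2 := by positivity

lemma hasDeriv_v (b r : ℝ) : HasDerivAt (fun b : ℝ => b/(1+b^2*r^2))
    ((1-b^2*r^2)/(1+b^2*r^2)^2) b := by
  have h1 : HasDerivAt (fun b : ℝ => 1+b^2*r^2) (2*b*r^2) b := by
    have := (((hasDerivAt_id b).pow 2).mul_const (r^2)).const_add 1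
    simpa using this
  have := (hasDerivAt_id b).div h1 (den_pos b r).ne'
  refine HasDerivAt.congr_deriv this ?_
  simp only [id]; ring

lemma hasDeriv_H (n : ℕ) (b r : ℝ) : HasDerivAt (fun b : ℝ => (b/(1+b^2*r^2))^n)
    (Gf n b r) b := (hasDeriv_v b r).pow n

lemma integrand_eq (n : ℕ) (s C₀ b r : ℝ) (hn0 : 0 < n) (_hs0 : 0 < s)
    (hn : 2 * s + 2 < (n : ℝ)) (hC₀ : 0 < C₀) (hb : 0 < b) :
    (C₀ * (b / (1 + b ^ 2 * r ^ 2)) ^ (((n : ℝ) - 2 * s) / 2)) ^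
                  (((n : ℝ) + 2 * s) / ((n : ℝ) - 2 * s)) *
                deriv (fun b : ℝ =>
                  C₀ * (b / (1 + b ^ 2 * r ^ 2)) ^ (((n : ℝ) - 2 * s) / 2)) b =
    C₀ ^ (2 * (n : ℝ) / ((n : ℝ) - 2 * s)) * (((n : ℝ) - 2 * s) / (2 * n)) * Gf n b r := by
  have hd := den_pos b r
  have hv : 0 < b / (1+b^2*r^2) := by positivity
  have h := ((hasDeriv_v b r).rpow_const (p := ((n : ℝ) - 2 * s) / 2) (Or.inl hv.ne')).const_mul C₀
  rw [h.deriv]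
  have hns : (n:ℝ) - 2*s ≠ 0 := by linarith
  have hn' : (n:ℝ) ≠ 0 := by positivity
  unfold Gf
  set v := b / (1+b^2*r^2)
  set v' := (1-b^2*r^2)/(1+b^2*r^2)^2
  rw [Real.mul_rpow hC₀.le (by positivity), ← Real.rpow_mul hv.le]
  have e1 : 2 * (n : ℝ) / ((n : ℝ) - 2 * s) = ((n : ℝ) + 2 * s) / ((n : ℝ) - 2 * s) + 1 := by
    field_simp; ring
  rw [e1, Real.rpow_add hC₀, Real.rpow_one]
  have e2 : v^(n-1) = v ^ (((n : ℝ) - 2 * s) / 2 * (((n : ℝ) + 2 * s) / ((n : ℝ) - 2 * s))) *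
      v ^ (((n : ℝ) - 2 * s) / 2 - 1) := by
    rw [← Real.rpow_add hv, ← Real.rpow_natCast, Nat.cast_sub hn0]
    congr 1
    field_simp; push_cast; ring
  rw [e2]
  field_simp

lemma Gf_bound (n : ℕ) (hn0 : 0 < n) (c1 c2 : ℝ) (h1 : 0 < c1) (h12 : c1 ≤ c2) :
    ∃ M : ℝ, 0 ≤ M ∧ ∀ b ∈ Set.Icc c1 c2, ∀ r, |Gf n b r| ≤ M * (1+r^2)^(-(n:ℝ)) := by
  set μ := min 1 (c1^2) with hμ
  have hμ0 : 0 < μ := by positivity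
  refine ⟨n * c2^(n-1) / μ^n, by have := h1.trans_le h12; positivity, ?_⟩
  rintro b ⟨hb1, hb2⟩ r
  have hb : 0 < b := h1.trans_le hb1
  have hc2 : 0 < c2 := by linarith
  have hd := den_pos b r
  have hd2 : μ * (1+r^2) ≤ 1 + b^2*r^2 := by
    have : μ ≤ b^2 := (min_le_right _ _).trans (by gcongr)
    have : μ ≤ 1 := min_le_left _ _
    nlinarith [sq_nonneg r]
  have hr : 0 < 1 + r^2 := by positivity
  have hA : |b/(1+b^2*r^2)| ≤ c2/(μ*(1+r^2)) := by
    rw [abs_of_pos (by positivity)]; gcongr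
  have hB : |(1-b^2*r^2)/(1+b^2*r^2)^2| ≤ 1/(μ*(1+r^2)) := by
    calc _ ≤ 1/(1+b^2*r^2) := by
          rw [abs_div, abs_of_pos (by positivity : 0 < (1+b^2*r^2)^2), div_le_div_iff₀ (by positivity) hd]
          have : |1-b^2*r^2| ≤ 1+b^2*r^2 := by
            rw [abs_le]; constructor <;> nlinarith [mul_nonneg (sq_nonneg b) (sq_nonneg r)]
          nlinarith
      _ ≤ _ := by gcongr
  have : |Gf n b r| ≤ n * (c2/(μ*(1+r^2)))^(n-1) * (1/(μ*(1+r^2))) := by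
    unfold Gf
    rw [abs_mul, abs_mul, abs_pow, Nat.abs_cast]
    gcongr
  refine this.trans (le_of_eq ?_)
  rw [Real.rpow_neg hr.le, Real.rpow_natCast]
  obtain ⟨k, rfl⟩ : ∃ k, n = k+1 := ⟨n-1, by omega⟩
  simp only [Nat.add_sub_cancel, pow_succ, div_pow, mul_pow]
  field_simp

lemma weight_integrable (n : ℕ) (γ : ℝ) (h0 : 0 ≤ γ) (hγ : γ < n) :
    Integrable (fun y : EuclideanSpace ℝ (Fin n) => (1+‖y‖)^γ * (1+‖y‖^2)^(-(n:ℝ))) := by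
  have h := (integrable_rpow_neg_one_add_norm_sq (E := EuclideanSpace ℝ (Fin n)) (μ := volume)
    (r := 2*n-γ) (by simp; linarith)).const_mul (2^(γ/2))
  refine h.mono' ?_ ?_
  · apply Continuous.aestronglyMeasurable
    refine Continuous.mul ?_ ?_
    · exact (by fun_prop : Continuous fun y : EuclideanSpace ℝ (Fin n) => 1+‖y‖).rpow_const
        (fun y => Or.inl (by positivity))
    · exact (by fun_prop : Continuous fun y : EuclideanSpace ℝ (Fin n) => 1+‖y‖^2).rpow_const
        (fun y => Or.inl (by positivity))
  · refine Filter.Eventually.of_forall fun y => ?_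
    have hp : 0 < 1 + ‖y‖^2 := by positivity
    rw [Real.norm_of_nonneg (by positivity)]
    have : (1+‖y‖)^γ ≤ 2^(γ/2) * (1+‖y‖^2)^(γ/2) := by
      rw [← Real.mul_rpow (by norm_num) hp.le]
      calc (1+‖y‖)^γ = ((1+‖y‖)^2)^(γ/2) := by
            rw [← Real.rpow_natCast, ← Real.rpow_mul (by positivity)]; congr 1; push_cast; ring
        _ ≤ _ := by
          apply Real.rpow_le_rpow (by positivity) _ (by linarith)
          nlinarith [sq_nonneg (1-‖y‖)]
    calc _ ≤ 2^(γ/2) * (1+‖y‖^2)^(γ/2) * (1+‖y‖^2)^(-(n:ℝ)) := by gcongr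
      _ = _ := by rw [mul_assoc, ← Real.rpow_add hp]; congr 2; ring

lemma hasDeriv_phi (α : ℝ) (hα : 0 < α) (u : ℝ) :
    HasDerivAt (fun u : ℝ => |u|^α * u) ((α+1)*|u|^α) u := by
  rcases eq_or_ne u 0 with rfl | hu
  · rw [hasDerivAt_iff_tendsto_slope_zero]
    have : Filter.Tendsto (fun t : ℝ => |t|^α) (nhdsWithin 0 {0}ᶜ) (nhds 0) := by
      have : Continuous fun t : ℝ => |t|^α := continuous_abs.rpow_const (fun _ => Or.inr hα.le)
      have := this.tendsto 0
      simp [hα.ne'] at this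
      exact this.mono_left nhdsWithin_le_nhds
    simp only [abs_zero, Real.zero_rpow hα.ne', mul_zero]
    refine this.congr' ?_
    filter_upwards [self_mem_nhdsWithin] with t ht
    have : t ≠ 0 := ht
    simp; field_simp
  · have h1 : HasDerivAt (fun u : ℝ => |u|^α) (SignType.sign u * α * |u|^(α-1)) u :=
      (hasDerivAt_abs hu).rpow_const (Or.inl (by simpa using hu))
    have := h1.mul (hasDerivAt_id u)
    refine HasDerivAt.congr_deriv this ?_
    have h2 : |u|^α = |u|^(α-1) * |u| := by
      rw [Real.rpow_sub_one (by simpa using hu)]; field_simp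
    have h3 : (SignType.sign u : ℝ) * u = |u| := sign_mul_self u
    simp only [id]
    rw [h2, ← h3]; ring

lemma second_diff (β : ℝ) (hβ : 2 < β) (t p : ℝ) (hp : |p| ≤ 1) :
    |(|t+p|^β + |t-p|^β - 2*|t|^β)| ≤ 2*β*(β-1)*(1+|t|)^β * p^2 := by
  have hf : ∀ q, HasDerivAt (fun q => |t+q|^β + |t-q|^β)
      (β * (|t+q|^(β-2)*(t+q)) - β * (|t-q|^(β-2)*(t-q))) q := by
    intro q
    have h1 := (hasDerivAt_abs_rpow (t+q) (by linarith : 1 < β)).comp q ((hasDerivAt_id q).const_add t)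
    have h2 := (hasDerivAt_abs_rpow (t-q) (by linarith : 1 < β)).comp q ((hasDerivAt_id q).const_sub t)
    refine HasDerivAt.congr_deriv (h1.add h2) ?_
    ring
  have hs : Convex ℝ (Set.uIcc (0:ℝ) p) := convex_uIcc _ _
  have hq : ∀ q ∈ Set.uIcc (0:ℝ) p, |q| ≤ |p| := by
    intro q hq
    have := Set.abs_sub_left_of_mem_uIcc hq
    simpa using this
  have hphi : ∀ q, |q| ≤ |p| → |(|t+q|^(β-2)*(t+q)) - (|t-q|^(β-2)*(t-q))| ≤ 
      (β-1)*(1+|t|)^β * (2*|p|) := by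
    intro q hq
    have hB : ∀ x ∈ Metric.closedBall t |p|, ‖(β-2+1)*|x|^(β-2)‖ ≤ (β-1)*(1+|t|)^β := by
      intro x hx
      rw [Real.norm_of_nonneg (by have : 0 < β-2 := by linarith
                                  positivity)]
      have : |x| ≤ 1 + |t| := by
        rw [Metric.mem_closedBall, Real.dist_eq] at hx
        have := abs_sub_abs_le_abs_sub x t
        linarith
      have h3 : |x|^(β-2) ≤ (1+|t|)^β :=
        (Real.rpow_le_rpow (abs_nonneg _) this (by linarith)).trans
          (Real.rpow_le_rpow_of_exponent_le (by have := abs_nonneg t; linarith) (by linarith))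
      nlinarith
    have := Convex.norm_image_sub_le_of_norm_hasDerivWithin_le
      (fun x _ => (hasDeriv_phi (β-2) (by linarith) x).hasDerivWithinAt) hB
      (convex_closedBall t |p|) (x := t-q) (y := t+q) (by simpa using hq) (by simpa using hq)
    rw [Real.norm_eq_abs, Real.norm_eq_abs] at this
    refine this.trans ?_
    have h0 : 0 ≤ (β-1)*(1+|t|)^β := by
      have : 0 < β-1 := by linarith
      positivity
    gcongr
    rw [show t+q-(t-q) = 2*q by ring, abs_mul, abs_two]
    linarith
  have := Convex.norm_image_sub_le_of_norm_hasDerivWithin_le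
      (C := β * ((β-1)*(1+|t|)^β * (2*|p|)))
      (fun x _ => (hf x).hasDerivWithinAt) (fun q h => by
        rw [← mul_sub, norm_mul, Real.norm_of_nonneg (by linarith), Real.norm_eq_abs]
        exact mul_le_mul_of_nonneg_left (hphi q (hq q h)) (by linarith))
      hs (x := 0) (y := p) (by simp) (by simp)
  simp only [add_zero, sub_zero, Real.norm_eq_abs] at this
  rw [← two_mul] at this
  refine this.trans (le_of_eq ?_)
  rw [← sq_abs p]; ring

lemma Gf_cont (n : ℕ) (b : ℝ) :
    Continuous fun y : EuclideanSpace ℝ (Fin n) => Gf n b ‖y‖ := by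
  unfold Gf
  have h : ∀ y : EuclideanSpace ℝ (Fin n), 1 + b^2*‖y‖^2 ≠ 0 := fun y => (den_pos b _).ne'
  have h2 : ∀ y : EuclideanSpace ℝ (Fin n), (1 + b^2*‖y‖^2)^2 ≠ 0 := fun y => pow_ne_zero _ (h y)
  have c1 : Continuous fun y : EuclideanSpace ℝ (Fin n) => b / (1 + b^2*‖y‖^2) :=
    continuous_const.div (by fun_prop) h
  have c2 : Continuous fun y : EuclideanSpace ℝ (Fin n) => (1 - b^2*‖y‖^2) / (1 + b^2*‖y‖^2)^2 :=
    (by fun_prop : Continuous fun y : EuclideanSpace ℝ (Fin n) => (1 - b^2*‖y‖^2)).div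
      (by fun_prop) h2
  exact (continuous_const.mul (c1.pow _)).mul c2

lemma prod_bound {n : ℕ} {γ b M B : ℝ}
    (hM : ∀ r, |Gf n b r| ≤ M * (1+r^2)^(-(n:ℝ)))
    (g : EuclideanSpace ℝ (Fin n) → ℝ) (hg : ∀ y, |g y| ≤ B * (1+‖y‖)^γ)
    (y : EuclideanSpace ℝ (Fin n)) :
    ‖g y * Gf n b ‖y‖‖ ≤ B * M * ((1+‖y‖)^γ * (1+‖y‖^2)^(-(n:ℝ))) := by
  rw [norm_mul, Real.norm_eq_abs, Real.norm_eq_abs]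
  calc _ ≤ (B * (1+‖y‖)^γ) * (M * (1+‖y‖^2)^(-(n:ℝ))) :=
        mul_le_mul (hg y) (hM _) (abs_nonneg _) ((abs_nonneg _).trans (hg y))
    _ = _ := by ring

lemma gG_integrable {n : ℕ} {γ b M B : ℝ} (h0 : 0 ≤ γ) (hγ : γ < n)
    (hM : ∀ r, |Gf n b r| ≤ M * (1+r^2)^(-(n:ℝ)))
    (g : EuclideanSpace ℝ (Fin n) → ℝ) (hgc : Continuous g) (hg : ∀ y, |g y| ≤ B * (1+‖y‖)^γ) :
    Integrable (fun y => g y * Gf n b ‖y‖) :=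
  ((weight_integrable n γ h0 hγ).const_mul (B*M)).mono'
    (hgc.mul (Gf_cont n b)).aestronglyMeasurable
    (Filter.Eventually.of_forall (prod_bound hM g hg))

lemma gG_le {n : ℕ} {γ b M B : ℝ} (h0 : 0 ≤ γ) (hγ : γ < n)
    (hM : ∀ r, |Gf n b r| ≤ M * (1+r^2)^(-(n:ℝ)))
    (g : EuclideanSpace ℝ (Fin n) → ℝ) (hg : ∀ y, |g y| ≤ B * (1+‖y‖)^γ) :
    |∫ y, g y * Gf n b ‖y‖| ≤
      B * M * ∫ y : EuclideanSpace ℝ (Fin n), (1+‖y‖)^γ * (1+‖y‖^2)^(-(n:ℝ)) := by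
  rw [← integral_const_mul]
  exact norm_integral_le_of_norm_le ((weight_integrable n γ h0 hγ).const_mul (B*M))
    (Filter.Eventually.of_forall (prod_bound hM g hg))

lemma homog_int {n : ℕ} (hn0 : 0 < n) {γ b τ : ℝ} (h0 : 0 ≤ γ) (hγ : γ < n) (hb : 0 < b)
    (g : EuclideanSpace ℝ (Fin n) → ℝ) (hgc : Continuous g) (hg : ∀ y, |g y| ≤ (1+‖y‖)^γ)
    (hh : ∀ c : ℝ, 0 < c → ∀ y, g (c • y) = c^τ * g y) :
    ∫ y, g y * Gf n b ‖y‖ = -τ * b^(-(τ+1)) * ∫ y, g y * (1+‖y‖^2)^(-(n:ℝ)) := by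
  obtain ⟨M, hM0, hM⟩ := Gf_bound n hn0 (b/2) (2*b) (by positivity) (by linarith)
  -- value of the parametric integral
  have key : ∀ c : ℝ, 0 < c → ∫ y : EuclideanSpace ℝ (Fin n), g y * (c/(1+c^2*‖y‖^2))^n =
      c^(-τ) * ∫ y, g y * (1+‖y‖^2)^(-(n:ℝ)) := by
    intro c hc
    have h := Measure.integral_comp_smul (volume : Measure (EuclideanSpace ℝ (Fin n)))
      (fun y => g y * (1+‖y‖^2)^(-(n:ℝ))) c
    rw [finrank_euclideanSpace_fin, abs_of_pos (by positivity), smul_eq_mul] at h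
    have h2 : ∀ y : EuclideanSpace ℝ (Fin n), g y * (c/(1+c^2*‖y‖^2))^n =
        (c^(-τ) * c^n) * (g (c • y) * (1+‖c • y‖^2)^(-(n:ℝ))) := by
      intro y
      have hd := den_pos c ‖y‖
      rw [hh c hc, norm_smul, Real.norm_of_nonneg hc.le, mul_pow, Real.rpow_neg hd.le,
        Real.rpow_natCast, Real.rpow_neg hc.le, div_pow]
      have : c^τ ≠ 0 := (Real.rpow_pos_of_pos hc τ).ne'
      field_simp
    simp_rw [h2]
    rw [integral_const_mul, h]
    have : c^n ≠ 0 := by positivity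
    field_simp
  have hgm : ∀ c : ℝ, Continuous fun y : EuclideanSpace ℝ (Fin n) => g y * (c/(1+c^2*‖y‖^2))^n := by
    intro c
    have c1 : Continuous fun y : EuclideanSpace ℝ (Fin n) => c / (1 + c^2*‖y‖^2) :=
      continuous_const.div (by fun_prop) (fun y => (den_pos c _).ne')
    exact hgc.mul (c1.pow n)
  have hint : Integrable fun y : EuclideanSpace ℝ (Fin n) => g y * (b/(1+b^2*‖y‖^2))^n := by
    set μ := min 1 (b^2) with hμ
    have hμ0 : 0 < μ := by positivity
    refine ((weight_integrable n γ h0 hγ).const_mul ((b/μ)^n)).mono'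
      (hgm b).aestronglyMeasurable (Filter.Eventually.of_forall fun y => ?_)
    have hd := den_pos b ‖y‖
    have hp : 0 < 1 + ‖y‖^2 := by positivity
    rw [norm_mul, Real.norm_eq_abs, Real.norm_of_nonneg (by positivity)]
    have hd2 : μ * (1+‖y‖^2) ≤ 1 + b^2*‖y‖^2 := by
      have : μ ≤ b^2 := min_le_right _ _
      have : μ ≤ 1 := min_le_left _ _
      nlinarith [sq_nonneg ‖y‖]
    calc _ ≤ (1+‖y‖)^γ * (b/(μ*(1+‖y‖^2)))^n := by
          gcongr
          exact hg y
      _ = _ := by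
        rw [Real.rpow_neg hp.le, Real.rpow_natCast, div_pow, div_pow, mul_pow]
        field_simp
  have hD := hasDerivAt_integral_of_dominated_loc_of_deriv_le
    (μ := (volume : Measure (EuclideanSpace ℝ (Fin n))))
    (F := fun c y => g y * (c/(1+c^2*‖y‖^2))^n) (F' := fun c y => g y * Gf n c ‖y‖)
    (x₀ := b) (s := Set.Icc (b/2) (2*b))
    (bound := fun y => 1 * M * ((1+‖y‖)^γ * (1+‖y‖^2)^(-(n:ℝ))))
    (Icc_mem_nhds (by linarith) (by linarith))
    (Filter.Eventually.of_forall fun c => (hgm c).aestronglyMeasurable)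
    hint (hgc.mul (Gf_cont n b)).aestronglyMeasurable
    (Filter.Eventually.of_forall fun y c hc => prod_bound (hM c hc) g (by simpa using hg) y)
    ((weight_integrable n γ h0 hγ).const_mul _)
    (Filter.Eventually.of_forall fun y c hc => (hasDeriv_H n c ‖y‖).const_mul (g y))
  have h2 : HasDerivAt (fun c : ℝ => c^(-τ) * ∫ y, g y * (1+‖y‖^2)^(-(n:ℝ)))
      ((-τ * b^(-τ-1)) * ∫ y, g y * (1+‖y‖^2)^(-(n:ℝ))) b :=
    (Real.hasDerivAt_rpow_const (Or.inl hb.ne')).mul_const _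
  have h3 := hD.2.congr_of_eventuallyEq (f₁ := fun c : ℝ => c^(-τ) * ∫ y, g y * (1+‖y‖^2)^(-(n:ℝ)))
    (by filter_upwards [lt_mem_nhds hb] with c hc using (key c hc).symm)
  rw [h3.unique h2]
  ring_nf

lemma coord_int {n : ℕ} (β : ℝ) (i j : Fin n) :
    ∫ x : EuclideanSpace ℝ (Fin n), |x i| ^ β * (1 + ‖x‖ ^ 2) ^ (-(n : ℝ)) =
    ∫ x : EuclideanSpace ℝ (Fin n), |x j| ^ β * (1 + ‖x‖ ^ 2) ^ (-(n : ℝ)) := by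
  let e := LinearIsometryEquiv.piLpCongrLeft 2 ℝ ℝ (Equiv.swap i j)
  have := (e.measurePreserving).integral_comp e.toHomeomorph.measurableEmbedding
    (fun x : EuclideanSpace ℝ (Fin n) => |x j| ^ β * (1 + ‖x‖ ^ 2) ^ (-(n : ℝ)))
  rw [← this]
  congr 1
  ext x
  have h1 : ‖e x‖ = ‖x‖ := e.norm_map x
  have h2 : (e x) j = x i := by
    simp [e, LinearIsometryEquiv.piLpCongrLeft_apply, Equiv.piCongrLeft'_apply]
  rw [h1, h2]

lemma K_expand {n k : ℕ} {β γ : ℝ} (hβ : 0 < β) (hγ : β < γ) {a : Fin n → ℝ}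
    {K : EuclideanSpace ℝ (Fin n) → ℝ} (hK : KHyp n k β a K) (η : ℝ) (hη : 0 < η) :
    ∃ A : ℝ, 0 ≤ A ∧ ∀ x, |K x - 1 - ∑ i, a i * |x i|^β| ≤ η * ‖x‖^β + A * ‖x‖^γ := by
  obtain ⟨⟨K₀, K₁, hK0, hKb⟩, -, -, -, hK00, -, -, -, R, hR1, -, -, hR2⟩ := hK
  have hR3 : ∀ᶠ y in nhdsWithin (0 : EuclideanSpace ℝ (Fin n)) {0}ᶜ, |R y| ≤ η * ‖y‖^β := by
    filter_upwards [hR2.eventually (gt_mem_nhds hη), self_mem_nhdsWithin] with y hy hy0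
    have hy0 : 0 < ‖y‖ := norm_pos_iff.2 hy0
    have h1 := Finset.single_le_sum (s := Finset.range (⌊β⌋₊ + 1))
      (f := fun j : ℕ => ‖iteratedFDeriv ℝ j R y‖ * ‖y‖ ^ (-β + (j : ℝ)))
      (fun j _ => by positivity) (a := 0) (by simp)
    simp only [norm_iteratedFDeriv_zero, Nat.cast_zero, add_zero, Real.norm_eq_abs] at h1
    have h2 := h1.trans hy.le
    rw [Real.rpow_neg hy0.le, ← div_eq_mul_inv, div_le_iff₀ (by positivity)] at h2
    exact h2
  have hloc : ∀ᶠ y in nhds (0 : EuclideanSpace ℝ (Fin n)),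
      |K y - 1 - ∑ i, a i * |y i|^β| ≤ η * ‖y‖^β := by
    rw [eventually_nhdsWithin_iff] at hR3
    filter_upwards [hR1, hR3] with y h1 h2
    by_cases hy : y = 0
    · subst hy
      simp [hK00, Real.zero_rpow hβ.ne']
    · rw [h1]
      convert h2 hy using 2
      ring
  obtain ⟨δ, hδ, hball⟩ := Metric.eventually_nhds_iff.1 hloc
  set S := ∑ i, |a i| with hS
  have hS0 : 0 ≤ S := Finset.sum_nonneg fun i _ => abs_nonneg _
  have hK1 : 0 < K₁ := hK0.trans_le ((hKb 0).1.trans (hKb 0).2)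
  refine ⟨(K₁+1)/δ^γ + S * δ^(β-γ), by positivity, fun x => ?_⟩
  by_cases hx : ‖x‖ < δ
  · have := hball (y := x) (by simpa using hx)
    have : 0 ≤ ((K₁+1)/δ^γ + S * δ^(β-γ)) * ‖x‖^γ := by positivity
    linarith
  · push Not at hx
    have hx0 : 0 < ‖x‖ := hδ.trans_le hx
    have h1 : |∑ i, a i * |x i|^β| ≤ S * ‖x‖^β := by
      rw [hS, Finset.sum_mul]
      refine (Finset.abs_sum_le_sum_abs _ _).trans (Finset.sum_le_sum fun i _ => ?_)
      rw [abs_mul, abs_of_nonneg (by positivity : 0 ≤ |x i|^β)]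
      gcongr
      exact PiLp.norm_apply_le x i
    have h2 : |K x - 1| ≤ K₁ + 1 := by
      have := hKb x
      rw [abs_le]; constructor <;> linarith
    have h3 : K₁ + 1 ≤ (K₁+1)/δ^γ * ‖x‖^γ := by
      rw [div_mul_eq_mul_div, le_div_iff₀ (by positivity)]
      gcongr
      linarith
    have h4 : ‖x‖^β ≤ δ^(β-γ) * ‖x‖^γ := by
      calc ‖x‖^β = ‖x‖^(β-γ) * ‖x‖^γ := by rw [← Real.rpow_add hx0]; ring_nf
        _ ≤ _ := by
          gcongr ?_ * _
          exact Real.rpow_le_rpow_of_nonpos hδ hx (by linarith)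
    have h5 := mul_le_mul_of_nonneg_left h4 hS0
    have h6 : 0 ≤ η * ‖x‖^β := by positivity
    have h7 := abs_sub (K x - 1) (∑ i, a i * |x i|^β)
    nlinarith

lemma K_periodic {n k : ℕ} {β : ℝ} {a : Fin n → ℝ}
    {K : EuclideanSpace ℝ (Fin n) → ℝ} (hK : KHyp n k β a K) (q : Fin n → ℤ)
    (hq : ∀ j : Fin n, k ≤ (j : ℕ) → q j = 0) (v : EuclideanSpace ℝ (Fin n))
    (hv : ∀ j, v j = q j) (x : EuclideanSpace ℝ (Fin n)) : K (x + v) = K x := by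
  obtain ⟨-, -, -, hper, -⟩ := hK
  let H : AddSubgroup (EuclideanSpace ℝ (Fin n)) :=
    { carrier := {v | ∀ x, K (x + v) = K x}
      zero_mem' := fun x => by simp
      add_mem' := fun {u w} hu hw x => by rw [← add_assoc, hw, hu]
      neg_mem' := fun {u} hu x => by
        have := hu (x + -u)
        rw [← this]; simp }
  have hvs : v = ∑ j, q j • EuclideanSpace.single j (1:ℝ) := by
    ext i
    simp [hv, Pi.single_apply]
  have : v ∈ H := by
    rw [hvs]
    refine H.sum_mem fun j _ => ?_
    by_cases hj : (j:ℕ) < k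
    · exact H.zsmul_mem (fun x => hper x j hj) _
    · rw [hq j (not_lt.1 hj), zero_smul]; exact H.zero_mem
  exact this x

lemma coord_shift {n : ℕ} (hn0 : 0 < n) {β γ b M : ℝ} (hβ : 2 < β) (hβγ : β < γ) (hγ : γ < n)
    (hb : 0 < b) (hM : ∀ r, |Gf n b r| ≤ M * (1+r^2)^(-(n:ℝ)))
    (p : EuclideanSpace ℝ (Fin n)) (hp : ‖p‖ ≤ 1) (h : Fin n) :
    Integrable (fun y : EuclideanSpace ℝ (Fin n) => |y h + p h|^β * Gf n b ‖y‖) ∧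
    |(∫ y : EuclideanSpace ℝ (Fin n), |y h + p h|^β * Gf n b ‖y‖) +
      β * b^(-(β+1)) * ∫ x : EuclideanSpace ℝ (Fin n), |x ⟨0, hn0⟩| ^ β * (1 + ‖x‖ ^ 2) ^ (-(n : ℝ))|
     ≤ β * (β-1) * ‖p‖^2 * M *
      ∫ y : EuclideanSpace ℝ (Fin n), (1+‖y‖)^γ * (1+‖y‖^2)^(-(n:ℝ)) := by
  have h0 : 0 ≤ γ := by linarith
  have hcoord : ∀ y : EuclideanSpace ℝ (Fin n), |y h| ≤ ‖y‖ := fun y => PiLp.norm_apply_le y h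
  have hph : |p h| ≤ 1 := (hcoord p).trans hp
  have hbd : ∀ t (y : EuclideanSpace ℝ (Fin n)), |t| ≤ 1 → |(|y h + t|^β)| ≤ 1 * (1+‖y‖)^γ := by
    intro t y ht
    rw [abs_of_nonneg (by positivity), one_mul]
    have h1 : |y h + t| ≤ 1 + ‖y‖ := (abs_add_le _ _).trans (by linarith [hcoord y])
    exact (Real.rpow_le_rpow (abs_nonneg _) h1 (by linarith)).trans
      (Real.rpow_le_rpow_of_exponent_le (by linarith [norm_nonneg y]) hβγ.le)
  have hct : ∀ t, Continuous fun y : EuclideanSpace ℝ (Fin n) => |y h + t|^β := fun t =>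
    (by fun_prop : Continuous fun y : EuclideanSpace ℝ (Fin n) => |y h + t|).rpow_const
      (fun _ => Or.inr (by linarith))
  have hI : ∀ t, |t| ≤ 1 → Integrable
      (fun y : EuclideanSpace ℝ (Fin n) => |y h + t|^β * Gf n b ‖y‖) := fun t ht =>
    gG_integrable h0 hγ hM _ (hct t) (fun y => hbd t y ht)
  refine ⟨hI _ hph, ?_⟩
  have hz : ∫ y : EuclideanSpace ℝ (Fin n), |y h + 0|^β * Gf n b ‖y‖ =
      -β * b^(-(β+1)) * ∫ x : EuclideanSpace ℝ (Fin n), |x ⟨0, hn0⟩| ^ β * (1 + ‖x‖ ^ 2) ^ (-(n : ℝ)) := by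
    rw [← coord_int β h ⟨0, hn0⟩]
    have := homog_int hn0 h0 hγ hb (τ := β) (fun y => |y h + 0|^β) (hct 0)
      (fun y => by simpa using hbd 0 y (by simp)) (fun c hc y => by
        simp only [add_zero, PiLp.smul_apply, smul_eq_mul, abs_mul, abs_of_pos hc]
        rw [Real.mul_rpow hc.le (abs_nonneg _)])
    rw [this]
    simp only [add_zero]
  have hneg : ∫ y : EuclideanSpace ℝ (Fin n), |y h + -p h|^β * Gf n b ‖y‖ =
      ∫ y : EuclideanSpace ℝ (Fin n), |y h + p h|^β * Gf n b ‖y‖ := by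
    rw [← integral_neg_eq_self]
    congr 1; ext y
    rw [norm_neg, PiLp.neg_apply, ← neg_add, abs_neg]
  have hle := gG_le (B := 2*β*(β-1)*‖p‖^2) h0 hγ hM
    (fun y => |y h + p h|^β + |y h - p h|^β - 2*|y h|^β) (fun y => by
      refine (second_diff β hβ (y h) (p h) hph).trans ?_
      have h1 : (1+|y h|)^β ≤ (1+‖y‖)^γ :=
        (Real.rpow_le_rpow (by positivity) (by linarith [hcoord y]) (by linarith)).trans
          (Real.rpow_le_rpow_of_exponent_le (by linarith [norm_nonneg y]) hβγ.le)
      have h2 : (p h)^2 ≤ ‖p‖^2 := by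
        rw [← sq_abs]; gcongr; exact hcoord p
      have h3 : 0 ≤ 2*β*(β-1) := by nlinarith
      calc _ ≤ 2*β*(β-1)*(1+‖y‖)^γ*‖p‖^2 := by gcongr
        _ = _ := by ring)
  have heq : ∫ y : EuclideanSpace ℝ (Fin n),
      (|y h + p h|^β + |y h - p h|^β - 2*|y h|^β) * Gf n b ‖y‖ =
      2 * ((∫ y : EuclideanSpace ℝ (Fin n), |y h + p h|^β * Gf n b ‖y‖) +
      β * b^(-(β+1)) * ∫ x : EuclideanSpace ℝ (Fin n),
        |x ⟨0, hn0⟩| ^ β * (1 + ‖x‖ ^ 2) ^ (-(n : ℝ))) := by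
    have e : ∀ y : EuclideanSpace ℝ (Fin n),
      (|y h + p h|^β + |y h - p h|^β - 2*|y h|^β) * Gf n b ‖y‖ =
      (|y h + p h|^β * Gf n b ‖y‖ + |y h + -p h|^β * Gf n b ‖y‖) - 2 * (|y h + 0|^β * Gf n b ‖y‖) := by
      intro y; rw [add_zero, ← sub_eq_add_neg]; ring
    simp_rw [e]
    rw [integral_sub ((hI _ hph).fun_add (hI (-p h) (by rwa [abs_neg]))) ((hI 0 (by simp)).const_mul 2),
      integral_add (hI _ hph) (hI (-p h) (by rwa [abs_neg])), integral_const_mul, hz, hneg]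
    ring
  rw [heq, abs_mul, abs_two] at hle
  linarith

lemma core_est {n k : ℕ} (hn0 : 0 < n) {β γ b M η A lam : ℝ} (hβ : 2 < β) (hβγ : β < γ)
    (hγ : γ < n) (hb : 0 < b) (hM : ∀ r, |Gf n b r| ≤ M * (1+r^2)^(-(n:ℝ)))
    {a : Fin n → ℝ} {K : EuclideanSpace ℝ (Fin n) → ℝ} (hK : KHyp n k β a K)
    (hη : 0 < η) (hA : 0 ≤ A)
    (hE : ∀ x, |K x - 1 - ∑ i, a i * |x i|^β| ≤ η * ‖x‖^β + A * ‖x‖^γ)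
    (hlam : 0 < lam) (hAl : A * lam^(β-γ) ≤ η)
    (p : EuclideanSpace ℝ (Fin n)) (hp : ‖p‖ ≤ 1) :
    |(∫ y : EuclideanSpace ℝ (Fin n), K (lam⁻¹ • (y + p)) * Gf n b ‖y‖) +
      β * (∑ h, a h) * b^(-(β+1)) * lam^(-β) *
        ∫ x : EuclideanSpace ℝ (Fin n), |x ⟨0, hn0⟩| ^ β * (1 + ‖x‖ ^ 2) ^ (-(n : ℝ))|
    ≤ lam^(-β) * (2 * η * M * (∫ y : EuclideanSpace ℝ (Fin n), (1+‖y‖)^γ * (1+‖y‖^2)^(-(n:ℝ))) +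
      (∑ h, |a h|) * (β * (β-1) * ‖p‖^2 * M *
        ∫ y : EuclideanSpace ℝ (Fin n), (1+‖y‖)^γ * (1+‖y‖^2)^(-(n:ℝ)))) := by
  have h0 : 0 ≤ γ := by linarith
  have hKc : Continuous K := hK.2.1.continuous
  set J := ∫ y : EuclideanSpace ℝ (Fin n), (1+‖y‖)^γ * (1+‖y‖^2)^(-(n:ℝ)) with hJ
  set I := ∫ x : EuclideanSpace ℝ (Fin n), |x ⟨0, hn0⟩| ^ β * (1 + ‖x‖ ^ 2) ^ (-(n : ℝ)) with hI
  have hlb : 0 < lam^(-β) := Real.rpow_pos_of_pos hlam _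
  let g1 : EuclideanSpace ℝ (Fin n) → ℝ := fun y =>
    K (lam⁻¹ • (y+p)) - 1 - ∑ i, a i * |(lam⁻¹ • (y+p)) i|^β
  have hg1c : Continuous g1 := by
    have c1 : Continuous fun y : EuclideanSpace ℝ (Fin n) => lam⁻¹ • (y+p) := by fun_prop
    refine ((hKc.comp c1).sub continuous_const).sub ?_
    refine continuous_finsetSum _ fun i _ => continuous_const.mul ?_
    refine Continuous.rpow_const ?_ (fun _ => Or.inr (by linarith))
    fun_prop
  have hg1 : ∀ y, |g1 y| ≤ (2*η*lam^(-β)) * (1+‖y‖)^γ := by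
    intro y
    refine (hE _).trans ?_
    have hz : ‖y+p‖ ≤ 1+‖y‖ := (norm_add_le _ _).trans (by linarith)
    have h1 : ‖y+p‖^β ≤ (1+‖y‖)^γ := (Real.rpow_le_rpow (norm_nonneg _) hz (by linarith)).trans
      (Real.rpow_le_rpow_of_exponent_le (by linarith [norm_nonneg y]) hβγ.le)
    have h2 : ‖y+p‖^γ ≤ (1+‖y‖)^γ := Real.rpow_le_rpow (norm_nonneg _) hz h0
    rw [norm_smul, Real.norm_of_nonneg (by positivity), Real.mul_rpow (by positivity) (norm_nonneg _),
      Real.mul_rpow (by positivity) (norm_nonneg _), Real.inv_rpow hlam.le, Real.inv_rpow hlam.le,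
      ← Real.rpow_neg hlam.le, ← Real.rpow_neg hlam.le]
    have h3 : A * lam^(-γ) ≤ η * lam^(-β) := by
      have : lam^(-γ) = lam^(β-γ) * lam^(-β) := by rw [← Real.rpow_add hlam]; ring_nf
      rw [this, ← mul_assoc]; gcongr
    calc η * (lam^(-β) * ‖y+p‖^β) + A * (lam^(-γ) * ‖y+p‖^γ)
        = η * lam^(-β) * ‖y+p‖^β + (A * lam^(-γ)) * ‖y+p‖^γ := by ring
      _ ≤ η * lam^(-β) * (1+‖y‖)^γ + (η * lam^(-β)) * (1+‖y‖)^γ := by gcongr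
      _ = _ := by ring
  have hg1i := gG_integrable h0 hγ hM g1 hg1c hg1
  have hg1l := gG_le h0 hγ hM g1 hg1
  have hone : ∀ y : EuclideanSpace ℝ (Fin n), |(1:ℝ)| ≤ (1+‖y‖)^γ := fun y => by
    rw [abs_one]; exact Real.one_le_rpow (by linarith [norm_nonneg y]) h0
  have h1i := gG_integrable (B := 1) h0 hγ hM (fun _ => (1:ℝ)) continuous_const
    (by simpa using hone)
  have h1z := homog_int hn0 h0 hγ hb (τ := 0) (fun _ => (1:ℝ)) continuous_const hone
    (fun c _ _ => by simp)
  have hcs := fun h => coord_shift hn0 hβ hβγ hγ hb hM p hp h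
  have heq : ∀ y : EuclideanSpace ℝ (Fin n), K (lam⁻¹ • (y + p)) * Gf n b ‖y‖ =
      (g1 y * Gf n b ‖y‖ + 1 * Gf n b ‖y‖) +
        ∑ h, (a h * lam^(-β)) * (|y h + p h|^β * Gf n b ‖y‖) := by
    intro y
    have : ∑ i, a i * |(lam⁻¹ • (y+p)) i|^β = ∑ h, (a h * lam^(-β)) * |y h + p h|^β := by
      refine Finset.sum_congr rfl fun h _ => ?_
      rw [PiLp.smul_apply, PiLp.add_apply, smul_eq_mul, abs_mul, abs_of_pos (by positivity),
        Real.mul_rpow (by positivity) (abs_nonneg _), Real.inv_rpow hlam.le, ← Real.rpow_neg hlam.le]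
      ring
    simp only [g1, this]
    simp_rw [← mul_assoc]
    rw [← Finset.sum_mul]
    ring
  have hint : ∫ y : EuclideanSpace ℝ (Fin n), K (lam⁻¹ • (y + p)) * Gf n b ‖y‖ =
      (∫ y, g1 y * Gf n b ‖y‖) +
        ∑ h, (a h * lam^(-β)) * ∫ y : EuclideanSpace ℝ (Fin n), |y h + p h|^β * Gf n b ‖y‖ := by
    simp_rw [heq]
    rw [integral_add (hg1i.fun_add h1i) (integrable_finsetSum _ fun h _ => (hcs h).1.const_mul _),
      integral_add hg1i h1i, h1z, integral_finsetSum _ fun h _ => (hcs h).1.const_mul _]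
    simp_rw [integral_const_mul]
    simp
  have hre : (∫ y : EuclideanSpace ℝ (Fin n), K (lam⁻¹ • (y + p)) * Gf n b ‖y‖) +
      β * (∑ h, a h) * b^(-(β+1)) * lam^(-β) * I = (∫ y, g1 y * Gf n b ‖y‖) +
      ∑ h, (a h * lam^(-β)) * ((∫ y : EuclideanSpace ℝ (Fin n), |y h + p h|^β * Gf n b ‖y‖) +
        β * b^(-(β+1)) * I) := by
    rw [hint]
    simp_rw [mul_add]
    rw [Finset.sum_add_distrib, ← Finset.sum_mul, ← Finset.sum_mul]
    ring
  rw [hre]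
  have hsum : |∑ h, (a h * lam^(-β)) * ((∫ y : EuclideanSpace ℝ (Fin n), |y h + p h|^β * Gf n b ‖y‖) +
        β * b^(-(β+1)) * I)| ≤ lam^(-β) * ((∑ h, |a h|) * (β * (β-1) * ‖p‖^2 * M * J)) := by
    refine (Finset.abs_sum_le_sum_abs _ _).trans ?_
    rw [Finset.sum_mul, Finset.mul_sum]
    refine Finset.sum_le_sum fun h _ => ?_
    rw [abs_mul, abs_mul, abs_of_pos hlb]
    calc _ ≤ |a h| * lam^(-β) * (β * (β-1) * ‖p‖^2 * M * J) := by
          gcongr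
          exact (hcs h).2
      _ = _ := by ring
  refine (abs_add_le _ _).trans ?_
  rw [mul_add]
  refine add_le_add (hg1l.trans (le_of_eq ?_)) hsum
  ring

theorem stmt_15 (n k : ℕ) (s β C₀ C₁ C₂ : ℝ) (hn0 : 0 < n) (hs0 : 0 < s) (hs1 : s < 1)
    (hn : 2 * s + 2 < (n : ℝ)) (hk1 : 1 ≤ k) (hk2 : (k : ℝ) < ((n : ℝ) - 2 * s) / 2)
    (hβ1 : (n : ℝ) - 2 * s < β) (hβ2 : β < (n : ℝ))
    (hC₀ : 0 < C₀) (hC₁ : 0 < C₁) (hC₁₂ : C₁ < C₂)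
    (a : Fin n → ℝ) (K : EuclideanSpace ℝ (Fin n) → ℝ) (hK : KHyp n k β a K)
    (ε : ℝ) (hε : 0 < ε) :
    ∃ C > (0 : ℝ), ∃ l₀ : ℕ, ∀ l : ℕ, l₀ ≤ l → ∀ m : ℕ, 1 ≤ m →
      ∀ lam : ℝ, lam = (l : ℝ) ^ (((n : ℝ) - 2 * s) / (β - (n : ℝ) + 2 * s)) →
      ∀ X : Fin ((m + 1) ^ k) → EuclideanSpace ℝ (Fin n), latticeEnum n k m (lam * l) X →
      ∀ P : Fin ((m + 1) ^ k) → EuclideanSpace ℝ (Fin n), (∀ i, ‖P i - X i‖ < 1 / 2) →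
      ∀ Λ : Fin ((m + 1) ^ k) → ℝ, (∀ i, Λ i ∈ Set.Icc C₁ C₂) →
      ∀ i : Fin ((m + 1) ^ k),
        |(∫ x : EuclideanSpace ℝ (Fin n),
              K (lam⁻¹ • x) *
                (C₀ * (Λ i / (1 + Λ i ^ 2 * ‖x - P i‖ ^ 2)) ^ (((n : ℝ) - 2 * s) / 2)) ^
                  (((n : ℝ) + 2 * s) / ((n : ℝ) - 2 * s)) *
                deriv (fun b : ℝ =>
                  C₀ * (b / (1 + b ^ 2 * ‖x - P i‖ ^ 2)) ^ (((n : ℝ) - 2 * s) / 2)) (Λ i)) +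
            (((n : ℝ) - 2 * s) / (2 * n)) * β * C₀ ^ (2 * (n : ℝ) / ((n : ℝ) - 2 * s)) *
              (∑ h, a h) * Λ i ^ (-(β + 1)) * lam ^ (-β) *
              ∫ x : EuclideanSpace ℝ (Fin n),
                |x ⟨0, hn0⟩| ^ β * (1 + ‖x‖ ^ 2) ^ (-(n : ℝ))| ≤
          C * ‖P i - X i‖ ^ (min 2 (β - 1)) * lam ^ (-β) + ε * lam ^ (-β) := by
  have hβ : 2 < β := by linarith
  have hnR : (0:ℝ) < n := by positivity
  obtain ⟨γ, hβγ, hγ⟩ := exists_between hβ2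
  obtain ⟨M, hM0, hM⟩ := Gf_bound n hn0 C₁ C₂ hC₁ hC₁₂.le
  set J := ∫ y : EuclideanSpace ℝ (Fin n), (1+‖y‖)^γ * (1+‖y‖^2)^(-(n:ℝ)) with hJ
  have hJ0 : 0 ≤ J := integral_nonneg fun y => by positivity
  set I := ∫ x : EuclideanSpace ℝ (Fin n), |x ⟨0, hn0⟩| ^ β * (1 + ‖x‖ ^ 2) ^ (-(n : ℝ)) with hI
  set κ := C₀ ^ (2 * (n : ℝ) / ((n : ℝ) - 2 * s)) * (((n : ℝ) - 2 * s) / (2 * n)) with hκ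
  have hκ0 : 0 < κ := by
    have : 0 < (n:ℝ) - 2*s := by linarith
    positivity
  set S := ∑ h, |a h| with hS
  have hS0 : 0 ≤ S := Finset.sum_nonneg fun i _ => abs_nonneg _
  set T := κ * M * J with hT
  have hT0 : 0 ≤ T := by positivity
  clear_value J I κ S T
  have hη : 0 < ε / (2*(T+1)) := by positivity
  obtain ⟨A, hA, hE⟩ := K_expand (by linarith) hβγ hK _ hη
  have hev : ∀ᶠ l : ℕ in Filter.atTop,
      A * ((l : ℝ) ^ (((n : ℝ) - 2 * s) / (β - (n : ℝ) + 2 * s)))^(β-γ) < ε / (2*(T+1)) := by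
    have h1 : Filter.Tendsto (fun x : ℝ => x^(-(γ-β))) Filter.atTop (nhds 0) :=
      tendsto_rpow_neg_atTop (by linarith)
    have h2 : Filter.Tendsto (fun x : ℝ => x ^ (((n : ℝ) - 2 * s) / (β - (n : ℝ) + 2 * s)))
        Filter.atTop Filter.atTop := tendsto_rpow_atTop (div_pos (by linarith) (by linarith))
    have h3 := ((h1.comp h2).comp (tendsto_natCast_atTop_atTop (R := ℝ))).const_mul A
    rw [mul_zero] at h3
    have h4 := h3.eventually (gt_mem_nhds hη)
    simpa only [Function.comp_def, neg_sub] using h4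
  obtain ⟨l₁, hl₁⟩ := Filter.eventually_atTop.1 hev
  have hββ : 0 ≤ β * (β-1) := by nlinarith
  refine ⟨κ * (S * (β * (β-1) * M * J)) + 1, by positivity, max l₁ 1, ?_⟩
  intro l hl m hm lam hlam X hX P hP Λ hΛ i
  have hl1 : l₁ ≤ l := (le_max_left _ _).trans hl
  have hl0 : 0 < l := (le_max_right _ _).trans hl
  have hlam0 : 0 < lam := by
    rw [hlam]; exact Real.rpow_pos_of_pos (by exact_mod_cast hl0) _
  have hAl : A * lam^(β-γ) ≤ ε / (2*(T+1)) := by rw [hlam]; exact (hl₁ l hl1).le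
  have hb : 0 < Λ i := hC₁.trans_le (hΛ i).1
  obtain ⟨q, -, hq0, hqX⟩ := hX.2.1 i
  set p := P i - X i with hp
  have hp1 : ‖p‖ ≤ 1 := by linarith [hP i]
  -- change of variables
  have hcv : (∫ x : EuclideanSpace ℝ (Fin n),
              K (lam⁻¹ • x) *
                (C₀ * (Λ i / (1 + Λ i ^ 2 * ‖x - P i‖ ^ 2)) ^ (((n : ℝ) - 2 * s) / 2)) ^
                  (((n : ℝ) + 2 * s) / ((n : ℝ) - 2 * s)) *
                deriv (fun b : ℝ =>
                  C₀ * (b / (1 + b ^ 2 * ‖x - P i‖ ^ 2)) ^ (((n : ℝ) - 2 * s) / 2)) (Λ i)) =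
      κ * ∫ y : EuclideanSpace ℝ (Fin n), K (lam⁻¹ • (y + p)) * Gf n (Λ i) ‖y‖ := by
    rw [← integral_const_mul, ← integral_sub_right_eq_self
      (fun y : EuclideanSpace ℝ (Fin n) => κ * (K (lam⁻¹ • (y + p)) * Gf n (Λ i) ‖y‖)) (P i)]
    congr 1; ext x
    rw [mul_assoc, integrand_eq n s C₀ (Λ i) _ hn0 hs0 hn hC₀ hb]
    have hper : K (lam⁻¹ • x) = K (lam⁻¹ • (x - P i + p)) := by
      have : lam⁻¹ • x = lam⁻¹ • (x - P i + p) + lam⁻¹ • X i := by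
        rw [← smul_add, hp]; congr 1; abel
      rw [this]
      refine K_periodic hK (fun j => l * q j) (fun j hj => by simp [hq0 j hj]) _ (fun j => ?_) _
      rw [PiLp.smul_apply, hqX j, smul_eq_mul]
      push_cast
      field_simp
    rw [hper, hκ]
    ring
  rw [hcv]
  have hcore := core_est hn0 hβ hβγ hγ hb (hM _ (hΛ i)) hK hη hA hE hlam0 hAl p hp1
  rw [← hJ, ← hI, ← hS] at hcore
  have hlb : 0 < lam^(-β) := Real.rpow_pos_of_pos hlam0 _
  have hpp : ‖p‖^2 ≤ ‖p‖^(min 2 (β-1)) := by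
    rw [← Real.rpow_natCast]
    exact Real.rpow_le_rpow_of_exponent_ge_of_imp (norm_nonneg _) hp1 (by push_cast; exact min_le_left _ _)
      (fun _ h => absurd h (by norm_num))
  clear_value p
  have hηT : κ * (2 * (ε / (2*(T+1))) * M * J) ≤ ε := by
    have : κ * (2 * (ε / (2*(T+1))) * M * J) = ε * (T/(T+1)) := by
      have h1 : T + 1 ≠ 0 := by positivity
      have h2 : κ * (2 * (ε / (2*(T+1))) * M * J) = 2 * (ε / (2*(T+1))) * T := by rw [hT]; ring
      rw [h2]; field_simp
    rw [this]
    have : T/(T+1) ≤ 1 := by rw [div_le_one (by positivity)]; linarith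
    nlinarith
  have hfac : κ * (∫ y : EuclideanSpace ℝ (Fin n), K (lam⁻¹ • (y + p)) * Gf n (Λ i) ‖y‖) +
      (((n : ℝ) - 2 * s) / (2 * n)) * β * C₀ ^ (2 * (n : ℝ) / ((n : ℝ) - 2 * s)) *
              (∑ h, a h) * Λ i ^ (-(β + 1)) * lam ^ (-β) * I =
      κ * ((∫ y : EuclideanSpace ℝ (Fin n), K (lam⁻¹ • (y + p)) * Gf n (Λ i) ‖y‖) +
        β * (∑ h, a h) * Λ i ^(-(β+1)) * lam^(-β) * I) := by
    rw [hκ]; ring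
  rw [hfac, abs_mul, abs_of_pos hκ0]
  have hfin : κ * (S * (β * (β-1) * ‖p‖^2 * M * J)) ≤
      (κ * (S * (β * (β-1) * M * J)) + 1) * ‖p‖^(min 2 (β-1)) := by
    calc _ = (κ * (S * (β * (β-1) * M * J))) * ‖p‖^2 := by ring
      _ ≤ (κ * (S * (β * (β-1) * M * J)) + 1) * ‖p‖^(min 2 (β-1)) := by
        gcongr
        linarith
  calc _ ≤ κ * (lam^(-β) * (2 * (ε / (2*(T+1))) * M * J + S * (β * (β-1) * ‖p‖^2 * M * J))) := by
        gcongr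
    _ = (κ * (S * (β * (β-1) * ‖p‖^2 * M * J))) * lam^(-β) +
        (κ * (2 * (ε / (2*(T+1))) * M * J)) * lam^(-β) := by ring
    _ ≤ _ := by gcongr
end
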